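/- arXiv:1308.3284 — 7 statements merged into one kernel-verified Lean document; each statement's English description precedes it below -/
import Mathlib

section
/- Let 1 ≤ k ≤ n−1 and let t₁,…,t_{n−1} be distinct complex numbers whose set is stable under complex conjugation, so that f(t) := ∏_{i=1}^{n−1}(t − t_i) has real coefficients. Suppose the derivative f′ is squarefree over ℂ and has exactly ρ real roots, and set c := (n−2−ρ)/2. Then the number of k-dimensional ℂ-subspaces H ⊆ ℂⁿ that are real and satisfy dim(H ∩ F_{i+1}(∞)) ≥ i for i = 1,…,k−1 and H ∩ F_{n−k}(t_i) ≠ {0} for i = 1,…,n−1, equals the coefficient of x^{n−k−1} y^{k−1} in the polynomial (x+y)^ρ (x²+y²)^c. [Corollary counting the real solutions of a real osculating instance of the Schubert problem (□_{k,n}, □^{n−1}).] -/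
/-- The `m`-th derivative of the rational normal curve `γ(t) = (1, t, t²/2!, …, t^{n-1}/(n-1)!)`
in `ℂⁿ`, evaluated at `t`. -/
noncomputable def gammaVec (n m : ℕ) (t : ℂ) : Fin n → ℂ :=
  fun i => Polynomial.eval t
    (Polynomial.derivative^[m]
      (Polynomial.C ((Nat.factorial (i : ℕ) : ℂ))⁻¹ * Polynomial.X ^ (i : ℕ)))

/-- The `i`-dimensional subspace `F_i(t)` osculating the rational normal curve at `γ(t)`. -/
noncomputable def oscFlag (n i : ℕ) (t : ℂ) : Submodule ℂ (Fin n → ℂ) :=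
  Submodule.span ℂ (Set.range fun m : Fin i => gammaVec n (m : ℕ) t)

/-- `F_i(∞)`: the span of the last `i` standard basis vectors of `ℂⁿ`. -/
noncomputable def infFlag (n i : ℕ) : Submodule ℂ (Fin n → ℂ) :=
  Submodule.pi Set.univ fun j : Fin n =>
    if (j : ℕ) + i < n then (⊥ : Submodule ℂ ℂ) else ⊤

/-- A ℂ-subspace of `ℂⁿ` is real if it is stable under coordinatewise complex conjugation. -/
def IsRealSubspace {n : ℕ} (H : Submodule ℂ (Fin n → ℂ)) : Prop :=
  ∀ v ∈ H, (fun j => (starRingEnd ℂ) (v j)) ∈ H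

open Polynomial

/-- The linear map sending `γ(t)` to a multiple of `(X - t)^(n-1)`. -/
noncomputable def toPoly (n : ℕ) : (Fin n → ℂ) →ₗ[ℂ] ℂ[X] :=
  ∑ j : Fin n, (monomial (j : ℕ)) ∘ₗ
    (((-1 : ℂ) ^ (n - 1 - (j : ℕ)) / (Nat.factorial j : ℂ)) • LinearMap.proj (Fin.rev j))

lemma coeff_toPoly (n : ℕ) (v : Fin n → ℂ) (j : Fin n) :
    (toPoly n v).coeff j = (-1 : ℂ) ^ (n - 1 - (j : ℕ)) / (Nat.factorial j : ℂ) * v (Fin.rev j) := by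
  simp [toPoly, LinearMap.sum_apply, coeff_monomial, Fin.val_inj]

lemma coeff_toPoly_of_le (n : ℕ) (v : Fin n → ℂ) (j : ℕ) (hj : n ≤ j) :
    (toPoly n v).coeff j = 0 := by
  simp only [toPoly, LinearMap.sum_apply, finsetSum_coeff]
  refine Finset.sum_eq_zero fun i _ => ?_
  simp only [LinearMap.comp_apply]
  rw [coeff_monomial, if_neg]
  have := i.2
  omega

lemma toPoly_mem_degreeLT_iff (n j : ℕ) (v : Fin n → ℂ) :
    toPoly n v ∈ degreeLT ℂ j ↔ v ∈ infFlag n j := by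
  rw [mem_degreeLT, degree_lt_iff_coeff_zero]
  simp only [infFlag, Submodule.mem_pi, Set.mem_univ, true_implies]
  constructor
  · intro h i
    split_ifs with hi
    · have h1 := h (Fin.rev i) (by simp [Fin.val_rev]; omega)
      rw [coeff_toPoly, Fin.rev_rev] at h1
      simpa [Nat.factorial_ne_zero] using h1
    · trivial
  · intro h l hl
    by_cases hln : l < n
    · have h1 := h (Fin.rev ⟨l, hln⟩)
      rw [if_pos (by simp [Fin.val_rev]; omega)] at h1
      have h2 := coeff_toPoly n v ⟨l, hln⟩
      simp only [Submodule.mem_bot] at h1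
      rw [h1] at h2
      simpa using h2
    · exact coeff_toPoly_of_le n v l (by omega)

lemma toPoly_mem_degreeLT (n : ℕ) (v : Fin n → ℂ) : toPoly n v ∈ degreeLT ℂ n := by
  rw [mem_degreeLT, degree_lt_iff_coeff_zero]
  exact fun l hl => coeff_toPoly_of_le n v l hl

lemma toPoly_injective (n : ℕ) : Function.Injective (toPoly n) := by
  rw [← LinearMap.ker_eq_bot, LinearMap.ker_eq_bot']
  intro v hv
  ext i
  have h1 := coeff_toPoly n v (Fin.rev i)
  rw [hv, Fin.rev_rev, coeff_zero] at h1
  simpa [Nat.factorial_ne_zero] using h1.symm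

lemma exists_toPoly_eq (n : ℕ) {p : ℂ[X]} (hp : p ∈ degreeLT ℂ n) : ∃ v, toPoly n v = p := by
  refine ⟨fun i => (-1 : ℂ) ^ (n - 1 - (Fin.rev i : ℕ)) * (Nat.factorial (Fin.rev i) : ℂ) *
    p.coeff (Fin.rev i), ?_⟩
  ext l
  by_cases hl : l < n
  · have h2 := coeff_toPoly n (fun i => (-1 : ℂ) ^ (n - 1 - (Fin.rev i : ℕ)) *
      (Nat.factorial (Fin.rev i) : ℂ) * p.coeff (Fin.rev i)) ⟨l, hl⟩
    rw [h2]
    simp only [Fin.rev_rev]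
    have h3 : (Nat.factorial l : ℂ) ≠ 0 := by exact_mod_cast Nat.factorial_ne_zero l
    have h4 : ((-1 : ℂ) ^ (n - 1 - l)) * (-1 : ℂ) ^ (n - 1 - l) = 1 := by
      rw [← mul_pow]; simp
    field_simp
    linear_combination p.coeff l * h4
  · rw [coeff_toPoly_of_le n _ l (by omega)]
    rw [mem_degreeLT, degree_lt_iff_coeff_zero] at hp
    exact (hp l (by omega)).symm

lemma toPoly_conj (n : ℕ) (v : Fin n → ℂ) :
    toPoly n (fun j => (starRingEnd ℂ) (v j)) = (toPoly n v).map (starRingEnd ℂ) := by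
  ext l
  rw [coeff_map]
  by_cases hl : l < n
  · rw [show l = ((⟨l, hl⟩ : Fin n) : ℕ) from rfl, coeff_toPoly, coeff_toPoly]
    simp
  · rw [coeff_toPoly_of_le n _ l (by omega), coeff_toPoly_of_le n _ l (by omega), map_zero]

lemma gammaVec_apply (n m : ℕ) (t : ℂ) (i : Fin n) :
    gammaVec n m t i = (Nat.factorial i : ℂ)⁻¹ * ((i : ℕ).descFactorial m * t ^ ((i : ℕ) - m)) := by
  simp [gammaVec, iterate_derivative_C_mul, iterate_derivative_X_pow_eq_C_mul]

lemma toPoly_gammaVec (n m : ℕ) (hm : m < n) (t : ℂ) :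
    toPoly n (gammaVec n m t) =
      ((-1 : ℂ) ^ m / (Nat.factorial (n - 1 - m) : ℂ)) • (X - C t) ^ (n - 1 - m) := by
  ext l
  rw [coeff_smul, sub_eq_add_neg, ← C_neg, coeff_X_add_C_pow, smul_eq_mul]
  by_cases hl : l < n
  · rw [show (toPoly n (gammaVec n m t)).coeff l = _ from coeff_toPoly n _ ⟨l, hl⟩, gammaVec_apply]
    simp only [Fin.val_rev]
    by_cases hlm : l + m < n
    · obtain ⟨d, rfl⟩ : ∃ d, n = l + m + d + 1 := ⟨n - 1 - l - m, by omega⟩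
      have e1 : l + m + d + 1 - 1 - l = m + d := by omega
      have e2 : l + m + d + 1 - (l + 1) = m + d := by omega
      have e3 : l + m + d + 1 - 1 - m = l + d := by omega
      have e4 : m + d - m = d := by omega
      have e5 : l + d - l = d := by omega
      have h1 : ((Nat.factorial d : ℂ)) * ((m + d).descFactorial m : ℂ) = Nat.factorial (m + d) := by
        have := Nat.factorial_mul_descFactorial (Nat.le_add_right m d)
        rw [e4] at this
        exact_mod_cast this
      have h2 : ((l + d).choose l : ℂ) * Nat.factorial l * Nat.factorial d = Nat.factorial (l + d) := by
        have := Nat.choose_mul_factorial_mul_factorial (Nat.le_add_right l d)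
        rw [e5] at this
        exact_mod_cast this
      have p1 : (Nat.factorial l : ℂ) ≠ 0 := by exact_mod_cast Nat.factorial_ne_zero l
      have p2 : (Nat.factorial d : ℂ) ≠ 0 := by exact_mod_cast Nat.factorial_ne_zero d
      have p3 : (Nat.factorial (m + d) : ℂ) ≠ 0 := by exact_mod_cast Nat.factorial_ne_zero _
      have p4 : (Nat.factorial (l + d) : ℂ) ≠ 0 := by exact_mod_cast Nat.factorial_ne_zero _
      rw [e1, e2, e3, e4, e5, neg_pow t, pow_add]
      have q1 : ((m + d).descFactorial m : ℂ) = Nat.factorial (m + d) / Nat.factorial d := by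
        field_simp; linear_combination h1
      have q2 : ((l + d).choose l : ℂ) = Nat.factorial (l + d) / (Nat.factorial l * Nat.factorial d) := by
        field_simp; linear_combination h2
      rw [q1, q2]
      field_simp
    · rw [Nat.descFactorial_of_lt (by omega), Nat.choose_eq_zero_of_lt (by omega)]
      simp
  · rw [coeff_toPoly_of_le n _ l (by omega), Nat.choose_eq_zero_of_lt (by omega)]
    simp

lemma mem_oscFlag_iff (n k : ℕ) (hk : k ≤ n) (t : ℂ) (v : Fin n → ℂ) :
    v ∈ oscFlag n (n - k) t ↔ (X - C t) ^ k ∣ toPoly n v := by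
  constructor
  · intro hv
    have hle : oscFlag n (n - k) t ≤
        ((Ideal.span {(X - C t) ^ k}).restrictScalars ℂ).comap (toPoly n) := by
      refine Submodule.span_le.2 ?_
      rintro _ ⟨m, rfl⟩
      have hm := m.2
      simp only [Submodule.comap_coe, Set.mem_preimage, SetLike.mem_coe,
        Submodule.restrictScalars_mem, Ideal.mem_span_singleton]
      rw [toPoly_gammaVec n m (by omega)]
      exact dvd_smul_of_dvd _ (pow_dvd_pow _ (by omega))
    simpa [Ideal.mem_span_singleton] using hle hv
  · rintro hd
    have hmap : toPoly n v ∈ (oscFlag n (n - k) t).map (toPoly n) := by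
      rw [← sum_taylor_eq (toPoly n v) t, Polynomial.sum]
      refine Submodule.sum_mem _ fun j hj => ?_
      have hjn : j < n := by
        by_contra hjn
        rw [mem_support_iff] at hj
        refine hj (coeff_eq_zero_of_degree_lt ?_)
        rw [degree_taylor]
        exact (mem_degreeLT.1 (toPoly_mem_degreeLT n v)).trans_le (by exact_mod_cast not_lt.1 hjn)
      have hjk : k ≤ j := by
        by_contra hjk
        rw [mem_support_iff] at hj
        obtain ⟨r, hr⟩ := hd
        apply hj
        rw [hr, taylor_mul, taylor_pow]
        simp only [map_sub, taylor_X, taylor_C, add_sub_cancel_right]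
        rw [coeff_X_pow_mul', if_neg hjk]
      have hg := toPoly_gammaVec n (n - 1 - j) (by omega) t
      rw [show n - 1 - (n - 1 - j) = j by omega] at hg
      rw [← smul_eq_C_mul]
      refine Submodule.smul_mem _ _ ?_
      have hg2 : (X - C t) ^ j = ((-1 : ℂ) ^ (n - 1 - j) / (Nat.factorial j : ℂ))⁻¹ •
          toPoly n (gammaVec n (n - 1 - j) t) := by
        rw [hg, smul_smul, inv_mul_cancel₀, one_smul]
        exact div_ne_zero (pow_ne_zero _ (by norm_num)) (by exact_mod_cast Nat.factorial_ne_zero j)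
      rw [hg2]
      refine Submodule.smul_mem _ _ (Submodule.mem_map_of_mem (Submodule.subset_span ?_))
      exact ⟨⟨n - 1 - j, by omega⟩, rfl⟩
    obtain ⟨w, hw, hwv⟩ := hmap
    rwa [← toPoly_injective n hwv]

lemma finrank_infFlag (n j : ℕ) (hj : j ≤ n) : Module.finrank ℂ (infFlag n j) = j := by
  have hmap : (infFlag n j).map (toPoly n) = degreeLT ℂ j := by
    ext p
    constructor
    · rintro ⟨v, hv, rfl⟩
      exact (toPoly_mem_degreeLT_iff n j v).2 hv
    · intro hp
      obtain ⟨v, rfl⟩ := exists_toPoly_eq n (degreeLT_mono hj hp)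
      exact ⟨v, (toPoly_mem_degreeLT_iff n j v).1 hp, rfl⟩
  rw [(Submodule.equivMapOfInjective _ (toPoly_injective n) _).finrank_eq, hmap,
    (degreeLTEquiv ℂ j).finrank_eq]
  simp

/-- The bilinear form `∑ⱼ (-1)ʲ q⁽ʲ⁾ g⁽ᵐ⁻ʲ⁾`. -/
noncomputable def transvectant (m : ℕ) : ℂ[X] →ₗ[ℂ] ℂ[X] →ₗ[ℂ] ℂ[X] :=
  ∑ j ∈ Finset.range (m + 1), (-1 : ℂ) ^ j •
    (LinearMap.mul ℂ ℂ[X]).compl₁₂ ((derivative : ℂ[X] →ₗ[ℂ] ℂ[X]) ^ (m - j))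
      ((derivative : ℂ[X] →ₗ[ℂ] ℂ[X]) ^ j)

lemma transvectant_apply (m : ℕ) (g q : ℂ[X]) :
    transvectant m g q = ∑ j ∈ Finset.range (m + 1),
      (-1) ^ j * (derivative^[m - j] g * derivative^[j] q) := by
  simp only [transvectant, LinearMap.sum_apply, LinearMap.smul_apply, LinearMap.compl₁₂_apply,
    Module.End.pow_apply, LinearMap.mul_apply', smul_eq_C_mul]
  simp

lemma derivative_transvectant (m : ℕ) (g q : ℂ[X]) :
    derivative (transvectant m g q) =
      derivative^[m + 1] g * q + (-1) ^ m * (g * derivative^[m + 1] q) := by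
  have h := Finset.sum_range_sub'
    (fun j => (-1) ^ j * (derivative^[m + 1 - j] g * derivative^[j] q)) (m + 1)
  simp only [Nat.sub_self, Nat.sub_zero, pow_zero, one_mul, Function.iterate_zero, id] at h
  rw [pow_succ] at h
  rw [transvectant_apply, derivative_sum, ← sub_eq_zero, ← sub_eq_zero.2 h]
  have h2 : ∀ j ∈ Finset.range (m + 1),
      derivative ((-1) ^ j * (derivative^[m - j] g * derivative^[j] q)) =
      (-1) ^ j * (derivative^[m + 1 - j] g * derivative^[j] q) -
        (-1) ^ (j + 1) * (derivative^[m + 1 - (j + 1)] g * derivative^[j + 1] q) := by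
    intro j hj
    have hj' := Finset.mem_range.1 hj
    have h3 : ((-1 : ℂ[X]) ^ j) = C ((-1) ^ j) := by simp
    rw [show m + 1 - j = (m - j) + 1 by omega, show m + 1 - (j + 1) = m - j by omega,
      Function.iterate_succ_apply', Function.iterate_succ_apply', pow_succ, h3,
      derivative_C_mul, derivative_mul]
    ring
  rw [Finset.sum_congr rfl h2]
  ring

lemma transvectant_map_conj (m : ℕ) (g q : ℂ[X]) :
    transvectant m (g.map (starRingEnd ℂ)) (q.map (starRingEnd ℂ)) =
      (transvectant m g q).map (starRingEnd ℂ) := by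
  simp [transvectant_apply, Polynomial.map_sum, iterate_derivative_map]

lemma derivative_transvectant_of_mem {m : ℕ} {g : ℂ[X]} (hg : g ∈ degreeLT ℂ (m + 1)) (q : ℂ[X]) :
    derivative (transvectant m g q) = (-1) ^ m * (g * derivative^[m + 1] q) := by
  rw [derivative_transvectant, iterate_derivative_eq_zero_of_degree_lt (mem_degreeLT.1 hg)]
  simp

lemma transvectant_eq_C {m : ℕ} {g q : ℂ[X]} (hg : g ∈ degreeLT ℂ (m + 1))
    (hq : q ∈ degreeLT ℂ (m + 1)) :
    transvectant m g q = C ((transvectant m g q).coeff 0) := by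
  apply eq_C_of_derivative_eq_zero
  rw [derivative_transvectant_of_mem hg, iterate_derivative_eq_zero_of_degree_lt (mem_degreeLT.1 hq)]
  simp

lemma transvectant_one (m : ℕ) (g : ℂ[X]) : transvectant m g 1 = derivative^[m] g := by
  rw [transvectant_apply, Finset.sum_range_succ']
  simp [Function.iterate_succ_apply]

lemma eval_transvectant_of_dvd (m : ℕ) (g q : ℂ[X]) (t : ℂ) (h : (X - C t) ^ (m + 1) ∣ q) :
    (transvectant m g q).eval t = 0 := by
  rw [transvectant_apply, eval_finsetSum]
  refine Finset.sum_eq_zero fun j hj => ?_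
  have hj' := Finset.mem_range.1 hj
  have h1 : X - C t ∣ derivative^[j] q :=
    (dvd_pow_self _ (by omega)).trans (pow_sub_dvd_iterate_derivative_of_pow_dvd j h)
  simp [(dvd_iff_isRoot.1 h1).eq_zero]

lemma exists_derivative_eq {d : ℕ} {h : ℂ[X]} (hh : h ∈ degreeLT ℂ d) :
    ∃ q ∈ degreeLT ℂ (d + 1), derivative q = h := by
  rcases eq_or_ne h 0 with rfl | h0
  · exact ⟨0, Submodule.zero_mem _, derivative_zero⟩
  refine ⟨∑ i ∈ Finset.range d, monomial (i + 1) (h.coeff i / (i + 1)), ?_, ?_⟩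
  · refine Submodule.sum_mem _ fun i hi => mem_degreeLT.2 ((degree_monomial_le _ _).trans_lt ?_)
    have := Finset.mem_range.1 hi
    exact_mod_cast (by omega : i + 1 < d + 1)
  · rw [derivative_sum]
    conv_rhs => rw [as_sum_range' h d 
      ((natDegree_lt_iff_degree_lt h0).2 (mem_degreeLT.1 hh))]
    refine Finset.sum_congr rfl fun i _ => ?_
    rw [derivative_monomial]
    have : (i : ℂ) + 1 ≠ 0 := by exact_mod_cast Nat.succ_ne_zero i
    simp [this]

lemma exists_iterate_derivative_eq (k : ℕ) {d : ℕ} {h : ℂ[X]} (hh : h ∈ degreeLT ℂ d) :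
    ∃ q ∈ degreeLT ℂ (d + k), derivative^[k] q = h := by
  induction k with
  | zero => exact ⟨h, hh, rfl⟩
  | succ k ih =>
    obtain ⟨q, hq, rfl⟩ := ih
    obtain ⟨r, hr, rfl⟩ := exists_derivative_eq hq
    exact ⟨r, hr, rfl⟩

lemma exists_transvectant_eq_zero (m : ℕ) (S : Submodule ℂ ℂ[X]) (hS : S ≤ degreeLT ℂ (m + 1))
    (hdim : Module.finrank ℂ S ≤ m) :
    ∃ g ∈ degreeLT ℂ (m + 1), g ≠ 0 ∧ ∀ q ∈ S, transvectant m g q = 0 := by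
  let Φ : degreeLT ℂ (m + 1) →ₗ[ℂ] S →ₗ[ℂ] ℂ :=
    ((transvectant m).compl₁₂ (degreeLT ℂ (m + 1)).subtype S.subtype).compr₂ (lcoeff ℂ 0)
  have hfin : Module.finrank ℂ (degreeLT ℂ (m + 1)) = m + 1 := by
    rw [(degreeLTEquiv ℂ (m + 1)).finrank_eq]; simp
  have : Module.Finite ℂ (degreeLT ℂ (m + 1)) :=
    Module.Finite.equiv (degreeLTEquiv ℂ (m + 1)).symm
  have : Module.Finite ℂ S := Submodule.finiteDimensional_of_le hS
  have hker : LinearMap.ker Φ ≠ ⊥ := by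
    apply LinearMap.ker_ne_bot_of_finrank_lt
    rw [Subspace.dual_finrank_eq, hfin]
    omega
  obtain ⟨g, hg, hg0⟩ := (Submodule.ne_bot_iff _).1 hker
  refine ⟨g, g.2, fun h => hg0 (Subtype.ext h), fun q hq => ?_⟩
  have h1 : (transvectant m g q).coeff 0 = 0 :=
    LinearMap.congr_fun (LinearMap.mem_ker.1 hg) ⟨q, hq⟩
  rw [transvectant_eq_C g.2 (hS hq), h1, C_0]

lemma finrank_le_inf_ker_add_one {M : Type*} [AddCommGroup M] [Module ℂ M]
    [FiniteDimensional ℂ M] (S : Submodule ℂ M) (φ : M →ₗ[ℂ] ℂ) :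
    Module.finrank ℂ S ≤ Module.finrank ℂ ↥(S ⊓ LinearMap.ker φ) + 1 := by
  have h := Submodule.finrank_sup_add_finrank_inf_eq S (LinearMap.ker φ)
  have h1 := LinearMap.finrank_range_add_finrank_ker φ
  have h2 : Module.finrank ℂ (LinearMap.range φ) ≤ 1 := by
    simpa using Submodule.finrank_le (LinearMap.range φ)
  have h3 := Submodule.finrank_le (S ⊔ LinearMap.ker φ)
  omega

lemma finrank_inf_ker_add_one {M : Type*} [AddCommGroup M] [Module ℂ M]
    [FiniteDimensional ℂ M] (S : Submodule ℂ M) (φ : M →ₗ[ℂ] ℂ) {v : M} (hv : v ∈ S)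
    (hφ : φ v ≠ 0) :
    Module.finrank ℂ ↥(S ⊓ LinearMap.ker φ) + 1 = Module.finrank ℂ S := by
  refine le_antisymm (Nat.succ_le_of_lt (Submodule.finrank_lt_finrank_of_lt ?_))
    (finrank_le_inf_ker_add_one S φ)
  refine lt_of_le_of_ne inf_le_left fun h => hφ ?_
  rw [← h] at hv
  exact LinearMap.mem_ker.1 hv.2

lemma natDegree_le_of_mem_degreeLT {d : ℕ} {p : ℂ[X]} (hp : p ∈ degreeLT ℂ (d + 1)) :
    p.natDegree ≤ d :=
  natDegree_le_of_degree_le (Order.le_of_lt_succ (mem_degreeLT.1 hp))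

lemma mem_degreeLT_of_natDegree_le {d : ℕ} {p : ℂ[X]} (hp : p.natDegree ≤ d) :
    p ∈ degreeLT ℂ (d + 1) :=
  mem_degreeLT.2 ((degree_le_of_natDegree_le hp).trans_lt (by exact_mod_cast Nat.lt_succ_self d))

lemma mem_degreeLT_of_iterate_derivative_eq_zero {d : ℕ} {p : ℂ[X]}
    (hp : derivative^[d] p = 0) : p ∈ degreeLT ℂ d := by
  rw [mem_degreeLT, degree_lt_iff_coeff_zero]
  intro l hl
  have h := congrArg (fun r => r.coeff (l - d)) hp
  simp only [coeff_iterate_derivative, coeff_zero, Nat.sub_add_cancel hl, nsmul_eq_mul,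
    mul_eq_zero, Nat.cast_eq_zero, Nat.descFactorial_eq_zero_iff_lt] at h
  exact h.resolve_left (by omega)

lemma natDegree_transvectant_le {m d : ℕ} {g q : ℂ[X]} (hg : g.natDegree ≤ m)
    (hq : q.natDegree ≤ d) (hmd : m ≤ d) : (transvectant m g q).natDegree ≤ d := by
  rw [transvectant_apply]
  refine natDegree_sum_le_of_forall_le _ _ fun j hj => ?_
  have hj' := Finset.mem_range.1 hj
  have h1 : ((-1 : ℂ[X]) ^ j) = C ((-1) ^ j) := by simp
  have h2 := natDegree_iterate_derivative g (m - j)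
  have h3 := natDegree_iterate_derivative q j
  rw [h1]
  exact (natDegree_C_mul_le _ _).trans (natDegree_mul_le.trans (by omega))

/-- The space of vectors whose polynomials have transvectant with `g` proportional to `f`. -/
noncomputable def solSpace (n m : ℕ) (f g : ℂ[X]) : Submodule ℂ (Fin n → ℂ) :=
  (Submodule.span ℂ {f}).comap (transvectant m g ∘ₗ toPoly n)

lemma mem_solSpace {n m : ℕ} {f g : ℂ[X]} {v : Fin n → ℂ} :
    v ∈ solSpace n m f g ↔ ∃ c : ℂ, c • f = transvectant m g (toPoly n v) := by
  simp [solSpace, Submodule.mem_span_singleton]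

lemma coeff_transvectant_one_ne_zero {m : ℕ} {g : ℂ[X]} (hg : g.Monic) (hgm : g.natDegree = m) :
    (transvectant m g 1).coeff 0 ≠ 0 := by
  rw [transvectant_one, coeff_iterate_derivative, zero_add, ← hgm, hg.coeff_natDegree]
  simp

lemma exists_transvectant_eq {n m : ℕ} (hn : m + 2 ≤ n) {f g : ℂ[X]} (hfn : f.natDegree = n - 1)
    (hg : g.Monic) (hgm : g.natDegree = m) (hgf : g ∣ derivative f) :
    ∃ v, transvectant m g (toPoly n v) = f := by
  obtain ⟨h, hh⟩ := hgf
  have hfd : (derivative f).natDegree = n - 2 := by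
    rw [natDegree_derivative, hfn]; omega
  have hdeg : h.natDegree ≤ n - 2 - m := by
    rcases eq_or_ne h 0 with rfl | h0
    · simp
    · rw [hh, hg.natDegree_mul' h0] at hfd
      omega
  have hmem : (-1) ^ m * h ∈ degreeLT ℂ (n - 2 - m + 1) := by
    have h1 : ((-1 : ℂ[X]) ^ m) = C ((-1) ^ m) := by simp
    rw [h1]
    exact mem_degreeLT_of_natDegree_le ((natDegree_C_mul_le _ _).trans hdeg)
  obtain ⟨q, hq, hqh⟩ := exists_iterate_derivative_eq (m + 1) hmem
  rw [show n - 2 - m + 1 + (m + 1) = n by omega] at hq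
  have hgl : g ∈ degreeLT ℂ (m + 1) := mem_degreeLT_of_natDegree_le hgm.le
  have h1l : (1 : ℂ[X]) ∈ degreeLT ℂ (m + 1) := mem_degreeLT_of_natDegree_le (by simp)
  have hd : derivative (transvectant m g q - f) = 0 := by
    rw [derivative_sub, derivative_transvectant_of_mem hgl, hqh, hh, sub_eq_zero]
    have : ((-1 : ℂ[X]) ^ m) * (-1) ^ m = 1 := by rw [← mul_pow]; simp
    linear_combination g * h * this
  have hc := eq_C_of_derivative_eq_zero hd
  set a := (transvectant m g q - f).coeff 0
  have hb := coeff_transvectant_one_ne_zero hg hgm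
  have hbC := transvectant_eq_C hgl h1l
  set b := (transvectant m g 1).coeff 0
  obtain ⟨v, hv⟩ := exists_toPoly_eq n
    (p := q - (a / b) • 1) (Submodule.sub_mem _ hq
      (Submodule.smul_mem _ _ (degreeLT_mono (by omega) h1l)))
  refine ⟨v, ?_⟩
  rw [hv, map_sub, map_smul, hbC, smul_C, smul_eq_mul, div_mul_cancel₀ _ hb]
  linear_combination hc

lemma finrank_solSpace {n m : ℕ} (hn : m + 2 ≤ n) {f g : ℂ[X]} (hf : f.Monic)
    (hfn : f.natDegree = n - 1)
    (hg : g.Monic) (hgm : g.natDegree = m) (hgf : g ∣ derivative f) :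
    Module.finrank ℂ (solSpace n m f g) = m + 1 := by
  have hgl : g ∈ degreeLT ℂ (m + 1) := mem_degreeLT_of_natDegree_le hgm.le
  have h1l : (1 : ℂ[X]) ∈ degreeLT ℂ (m + 1) := mem_degreeLT_of_natDegree_le (by simp)
  obtain ⟨v, hv⟩ := exists_transvectant_eq hn hfn hg hgm hgf
  obtain ⟨u, hu⟩ := exists_toPoly_eq n (degreeLT_mono (by omega) h1l)
  have hf1 : f.coeff (n - 1) = 1 := by rw [← hfn]; exact hf
  have e1 := finrank_inf_ker_add_one (solSpace n m f g)
    (lcoeff ℂ (n - 1) ∘ₗ transvectant m g ∘ₗ toPoly n) (v := v)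
    (mem_solSpace.2 ⟨1, by rw [hv, one_smul]⟩) (by simp [hv, hf1])
  have e2 := finrank_inf_ker_add_one (infFlag n (m + 1))
    (lcoeff ℂ 0 ∘ₗ transvectant m g ∘ₗ toPoly n) (v := u)
    ((toPoly_mem_degreeLT_iff _ _ _).1 (hu ▸ h1l))
    (by simpa [hu] using coeff_transvectant_one_ne_zero hg hgm)
  rw [finrank_infFlag n (m + 1) (by omega)] at e2
  rw [← e1, ← e2]
  suffices h : solSpace n m f g ⊓
      LinearMap.ker (lcoeff ℂ (n - 1) ∘ₗ transvectant m g ∘ₗ toPoly n) =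
      infFlag n (m + 1) ⊓ LinearMap.ker (lcoeff ℂ 0 ∘ₗ transvectant m g ∘ₗ toPoly n) by rw [h]
  ext w
  simp only [Submodule.mem_inf, LinearMap.mem_ker, LinearMap.comp_apply, lcoeff_apply]
  constructor
  · rintro ⟨hw, hw0⟩
    obtain ⟨c, hc⟩ := mem_solSpace.1 hw
    rw [← hc, coeff_smul, hf1, smul_eq_mul, mul_one] at hw0
    rw [hw0, zero_smul] at hc
    refine ⟨(toPoly_mem_degreeLT_iff _ _ _).1 (mem_degreeLT_of_iterate_derivative_eq_zero ?_),
      by simp [← hc]⟩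
    have hd := derivative_transvectant_of_mem hgl (toPoly n w)
    rw [← hc] at hd
    simpa [hg.ne_zero] using hd.symm
  · rintro ⟨hw, hw0⟩
    have h := transvectant_eq_C hgl ((toPoly_mem_degreeLT_iff _ _ _).2 hw)
    rw [hw0, C_0] at h
    exact ⟨mem_solSpace.2 ⟨0, by simp [h]⟩, by simp [h]⟩

lemma le_finrank_solSpace_inf_infFlag {n m : ℕ} (hn : m + 2 ≤ n) {f g : ℂ[X]}
    (hgm : g.natDegree = m) {i : ℕ} (hi : i ≤ m) :
    i ≤ Module.finrank ℂ ↥(solSpace n m f g ⊓ infFlag n (i + 1)) := by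
  have e := finrank_le_inf_ker_add_one (infFlag n (i + 1))
    (lcoeff ℂ 0 ∘ₗ transvectant m g ∘ₗ toPoly n)
  rw [finrank_infFlag n (i + 1) (by omega)] at e
  refine (Nat.le_of_succ_le_succ e).trans (Submodule.finrank_mono ?_)
  rintro w ⟨hw, hw0⟩
  refine ⟨mem_solSpace.2 ⟨0, ?_⟩, hw⟩
  simp only [SetLike.mem_coe, LinearMap.mem_ker, LinearMap.comp_apply, lcoeff_apply] at hw0
  rw [transvectant_eq_C (mem_degreeLT_of_natDegree_le hgm.le)
    (degreeLT_mono (by omega) ((toPoly_mem_degreeLT_iff _ _ _).2 hw)), hw0]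
  simp

lemma solSpace_inf_oscFlag_ne_bot {n m : ℕ} (hn : m + 2 ≤ n) {f g : ℂ[X]} (hf : f.Monic)
    (hfn : f.natDegree = n - 1)
    (hg : g.Monic) (hgm : g.natDegree = m) (hgf : g ∣ derivative f) {t : ℂ} (ht : f.IsRoot t) :
    solSpace n m f g ⊓ oscFlag n (n - (m + 1)) t ≠ ⊥ := by
  have hgl : g ∈ degreeLT ℂ (m + 1) := mem_degreeLT_of_natDegree_le hgm.le
  obtain ⟨v, hv⟩ := exists_transvectant_eq hn hfn hg hgm hgf
  have hmon : ((X - C t) ^ (m + 1)).Monic := (monic_X_sub_C t).pow _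
  set p := toPoly n v %ₘ (X - C t) ^ (m + 1) with hp
  have hpl : p ∈ degreeLT ℂ (m + 1) := by
    rw [mem_degreeLT]
    refine (degree_modByMonic_lt _ hmon).trans_le ?_
    simp
  have hdiv : (X - C t) ^ (m + 1) ∣ toPoly n v - p :=
    ⟨toPoly n v /ₘ (X - C t) ^ (m + 1), by
      linear_combination -(modByMonic_add_div (toPoly n v) ((X - C t) ^ (m + 1)))⟩
  obtain ⟨u, hu⟩ := exists_toPoly_eq n (degreeLT_mono (by omega) hpl)
  have h0 := eval_transvectant_of_dvd m g _ t hdiv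
  have hC := transvectant_eq_C hgl hpl
  rw [map_sub, hv, hC, eval_sub, ht.eq_zero, eval_C, zero_sub, neg_eq_zero] at h0
  rw [h0, C_0] at hC
  have huv : transvectant m g (toPoly n (v - u)) = f := by
    rw [map_sub, map_sub, hu, hv, hC, sub_zero]
  refine (Submodule.ne_bot_iff _).2 ⟨v - u, ⟨mem_solSpace.2 ⟨1, by rw [huv, one_smul]⟩, ?_⟩, ?_⟩
  · refine (mem_oscFlag_iff n (m + 1) (by omega) t _).2 ?_
    rwa [map_sub, hu]
  · intro h
    rw [h, map_zero, map_zero] at huv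
    exact hf.ne_zero huv.symm

lemma eq_of_transvectant_eq {m : ℕ} {f g g' q : ℂ[X]} (hf : derivative f ≠ 0)
    (hg : g.Monic) (hgm : g.natDegree = m) (hg' : g'.Monic) (hgm' : g'.natDegree = m)
    (h : transvectant m g q = f) {c : ℂ} (h' : c • f = transvectant m g' q) : g = g' := by
  have hd := derivative_transvectant_of_mem (mem_degreeLT_of_natDegree_le hgm.le) q
  have hd' := derivative_transvectant_of_mem (mem_degreeLT_of_natDegree_le hgm'.le) q
  rw [h] at hd
  rw [← h', derivative_smul, hd, smul_eq_C_mul] at hd'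
  have hq : derivative^[m + 1] q ≠ 0 := by
    intro h0
    rw [h0, mul_zero, mul_zero] at hd
    exact hf hd
  have hs : ((-1 : ℂ[X]) ^ m) ≠ 0 := pow_ne_zero _ (by simp)
  have hcg : C c * g = g' := by
    apply mul_right_cancel₀ hq
    apply mul_left_cancel₀ hs
    linear_combination hd'
  have hc : c = 1 := by
    have := hg'.leadingCoeff
    rw [← hcg] at this
    simpa [leadingCoeff_mul, hg.leadingCoeff] using this
  rw [← hcg, hc]
  simp

lemma eq_of_solSpace_eq {n m : ℕ} (hn : m + 2 ≤ n) {f g g' : ℂ[X]} (hf' : derivative f ≠ 0)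
    (hfn : f.natDegree = n - 1) (hg : g.Monic) (hgm : g.natDegree = m) (hgf : g ∣ derivative f)
    (hg' : g'.Monic) (hgm' : g'.natDegree = m) (h : solSpace n m f g = solSpace n m f g') :
    g = g' := by
  obtain ⟨v, hv⟩ := exists_transvectant_eq hn hfn hg hgm hgf
  have hmem : v ∈ solSpace n m f g := mem_solSpace.2 ⟨1, by rw [hv, one_smul]⟩
  rw [h] at hmem
  obtain ⟨c, hc⟩ := mem_solSpace.1 hmem
  exact eq_of_transvectant_eq hf' hg hgm hg' hgm' hv hc

lemma isRealSubspace_solSpace_iff {n m : ℕ} (hn : m + 2 ≤ n) {f g : ℂ[X]}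
    (hf' : derivative f ≠ 0) (hfc : f.map (starRingEnd ℂ) = f)
    (hfn : f.natDegree = n - 1) (hg : g.Monic) (hgm : g.natDegree = m) (hgf : g ∣ derivative f) :
    IsRealSubspace (solSpace n m f g) ↔ g.map (starRingEnd ℂ) = g := by
  constructor
  · intro hreal
    obtain ⟨v, hv⟩ := exists_transvectant_eq hn hfn hg hgm hgf
    obtain ⟨c, hc⟩ := mem_solSpace.1 (hreal v (mem_solSpace.2 ⟨1, by rw [hv, one_smul]⟩))
    rw [toPoly_conj] at hc
    refine eq_of_transvectant_eq hf' (hg.map _) (by rw [natDegree_map, hgm]) hg hgm ?_ hc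
    rw [transvectant_map_conj, hv, hfc]
  · intro hgc v hv
    obtain ⟨c, hc⟩ := mem_solSpace.1 hv
    refine mem_solSpace.2 ⟨starRingEnd ℂ c, ?_⟩
    rw [toPoly_conj]
    conv_rhs => rw [← hgc]
    rw [transvectant_map_conj, ← hc, Polynomial.map_smul, hfc]

lemma exists_smul_eq_of_eval_eq_zero {N : ℕ} {t : Fin N → ℂ} (ht : Function.Injective t)
    {p : ℂ[X]} (hp : p.natDegree ≤ N) (h : ∀ i, p.eval (t i) = 0) :
    ∃ c : ℂ, c • ∏ i, (X - C (t i)) = p := by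
  have hdvd : ∏ i, (X - C (t i)) ∣ p :=
    Finset.prod_dvd_of_coprime (fun i _ j _ hij => pairwise_coprime_X_sub_C ht hij)
      fun i _ => dvd_iff_isRoot.2 (h i)
  obtain ⟨r, hr⟩ := hdvd
  have hmon : (∏ i, (X - C (t i))).Monic := monic_prod_of_monic _ _ fun i _ => monic_X_sub_C _
  have hdeg : (∏ i, (X - C (t i))).natDegree = N := by
    rw [natDegree_prod_of_monic _ _ fun i _ => monic_X_sub_C _]
    simp
  rcases eq_or_ne r 0 with rfl | hr0
  · exact ⟨0, by simp [hr]⟩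
  · rw [hr, hmon.natDegree_mul' hr0, hdeg] at hp
    refine ⟨r.coeff 0, ?_⟩
    rw [hr, smul_eq_C_mul, ← eq_C_of_natDegree_le_zero (by omega), mul_comm]

lemma exists_eq_solSpace {n m : ℕ} (hn : m + 2 ≤ n) {t : Fin (n - 1) → ℂ}
    (ht : Function.Injective t) {f : ℂ[X]} (hf : f = ∏ i, (X - C (t i)))
    {H : Submodule ℂ (Fin n → ℂ)} (hH : Module.finrank ℂ H = m + 1)
    (hflag : m ≤ Module.finrank ℂ ↥(H ⊓ infFlag n (m + 1)))
    (hosc : ∀ i, H ⊓ oscFlag n (n - (m + 1)) (t i) ≠ ⊥) :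
    ∃ g : ℂ[X], g.Monic ∧ g.natDegree = m ∧ g ∣ derivative f ∧ H = solSpace n m f g := by
  have hmon : f.Monic := hf ▸ monic_prod_of_monic _ _ fun i _ => monic_X_sub_C _
  have hfn : f.natDegree = n - 1 := by
    rw [hf, natDegree_prod_of_monic _ _ fun i _ => monic_X_sub_C _]
    simp
  have hexists : ∀ i, ∃ v ∈ H, v ∉ infFlag n (m + 1) ∧ (X - C (t i)) ^ (m + 1) ∣ toPoly n v := by
    intro i
    obtain ⟨v, hv, hv0⟩ := (Submodule.ne_bot_iff _).1 (hosc i)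
    have hd := (mem_oscFlag_iff n (m + 1) (by omega) _ v).1 hv.2
    refine ⟨v, hv.1, fun hvf => hv0 (toPoly_injective n ?_), hd⟩
    rw [map_zero]
    refine eq_zero_of_dvd_of_degree_lt hd ?_
    rw [degree_pow, degree_X_sub_C]
    simpa using mem_degreeLT.1 ((toPoly_mem_degreeLT_iff _ _ _).2 hvf)
  choose w hwH hwf hwd using hexists
  let i₀ : Fin (n - 1) := ⟨0, by omega⟩
  have hlt : H ⊓ infFlag n (m + 1) < H :=
    lt_of_le_of_ne inf_le_left fun h => hwf i₀ (inf_eq_left.1 h (hwH i₀))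
  have hle := Submodule.finrank_lt_finrank_of_lt hlt
  obtain ⟨g, hgl, hg0, hgS⟩ := exists_transvectant_eq_zero m
    ((H ⊓ infFlag n (m + 1)).map (toPoly n))
    (by rintro _ ⟨v, hv, rfl⟩; exact (toPoly_mem_degreeLT_iff _ _ _).2 hv.2)
    (by
      rw [← (Submodule.equivMapOfInjective _ (toPoly_injective n) _).finrank_eq]
      omega)
  have hspan : ∀ i, H ⊓ infFlag n (m + 1) ⊔ Submodule.span ℂ {w i} = H := by
    intro i
    refine Submodule.eq_of_le_of_finrank_le
      (sup_le inf_le_left ((Submodule.span_singleton_le_iff_mem _ _).2 (hwH i))) ?_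
    have : H ⊓ infFlag n (m + 1) < H ⊓ infFlag n (m + 1) ⊔ Submodule.span ℂ {w i} := by
      refine lt_of_le_of_ne le_sup_left fun h => hwf i ?_
      have h2 : w i ∈ H ⊓ infFlag n (m + 1) :=
        h ▸ Submodule.mem_sup_right (Submodule.mem_span_singleton_self _)
      exact h2.2
    have := Submodule.finrank_lt_finrank_of_lt this
    omega
  have hgd := natDegree_le_of_mem_degreeLT hgl
  have hHle : ∀ v ∈ H, ∃ c : ℂ, c • f = transvectant m g (toPoly n v) := by
    intro v hv
    rw [hf]
    refine exists_smul_eq_of_eval_eq_zero ht (natDegree_transvectant_le hgd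
      (natDegree_le_of_mem_degreeLT ?_) (by omega)) fun i => ?_
    · rw [show n - 1 + 1 = n by omega]
      exact toPoly_mem_degreeLT n v
    · rw [← hspan i] at hv
      obtain ⟨u, hu, z, hz, rfl⟩ := Submodule.mem_sup.1 hv
      obtain ⟨a, rfl⟩ := Submodule.mem_span_singleton.1 hz
      rw [map_add, map_add, map_smul, map_smul, hgS _ (Submodule.mem_map_of_mem hu), zero_add,
        eval_smul, eval_transvectant_of_dvd m g _ _ (hwd i), smul_zero]
  obtain ⟨c, hc⟩ := hHle _ (hwH i₀)
  have hd := derivative_transvectant_of_mem hgl (toPoly n (w i₀))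
  have hs : ((-1 : ℂ[X]) ^ m) = C ((-1) ^ m) := by simp
  have hsc : ((-1 : ℂ) ^ m) ≠ 0 := pow_ne_zero _ (by simp)
  have hD : derivative^[m + 1] (toPoly n (w i₀)) ≠ 0 := fun h =>
    hwf i₀ ((toPoly_mem_degreeLT_iff _ _ _).1 (mem_degreeLT_of_iterate_derivative_eq_zero h))
  have hc0 : c ≠ 0 := by
    rintro rfl
    rw [← hc, zero_smul, derivative_zero, hs, eq_comm, mul_eq_zero, mul_eq_zero] at hd
    simp [hg0, hD, -Function.iterate_succ] at hd
  rw [← hc, derivative_smul, hs, smul_eq_C_mul] at hd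
  have hgdvd : g ∣ derivative f := by
    have h1 : g ∣ C c * derivative f := hd ▸ (dvd_mul_right _ _).mul_left _
    exact (IsUnit.dvd_mul_left (isUnit_C.2 (isUnit_iff_ne_zero.2 hc0))).1 h1
  have hgm : g.natDegree = m := by
    have h1 := congrArg natDegree hd
    rw [natDegree_C_mul hc0, natDegree_C_mul hsc, natDegree_mul hg0 hD, natDegree_derivative,
      hfn] at h1
    have h2 := natDegree_iterate_derivative (toPoly n (w i₀)) (m + 1)
    have h3 : (toPoly n (w i₀)).natDegree ≤ n - 1 := by
      apply natDegree_le_of_mem_degreeLT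
      rw [show n - 1 + 1 = n by omega]
      exact toPoly_mem_degreeLT n _
    omega
  have hlc : g.leadingCoeff⁻¹ ≠ 0 := inv_ne_zero (leadingCoeff_ne_zero.2 hg0)
  have hmon' : (g.leadingCoeff⁻¹ • g).Monic := by
    rw [smul_eq_C_mul, mul_comm]
    exact monic_mul_leadingCoeff_inv hg0
  have hdeg' : (g.leadingCoeff⁻¹ • g).natDegree = m := by
    rw [smul_eq_C_mul, natDegree_C_mul hlc, hgm]
  have hdvd' : g.leadingCoeff⁻¹ • g ∣ derivative f := by
    rw [smul_eq_C_mul]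
    exact (IsUnit.mul_left_dvd (isUnit_C.2 (isUnit_iff_ne_zero.2 hlc))).2 hgdvd
  refine ⟨g.leadingCoeff⁻¹ • g, hmon', hdeg', hdvd', ?_⟩
  refine Submodule.eq_of_le_of_finrank_eq (fun v hv => ?_)
    (hH.trans (finrank_solSpace hn hmon hfn hmon' hdeg' hdvd').symm)
  obtain ⟨a, ha⟩ := hHle v hv
  exact mem_solSpace.2 ⟨g.leadingCoeff⁻¹ * a, by rw [mul_smul, ha, map_smul, LinearMap.smul_apply]⟩

open scoped Classical in
/-- The subsets of `R` of size `m` that are stable under conjugation. -/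
noncomputable def stableSubsets (R : Finset ℂ) (m : ℕ) : Finset (Finset ℂ) :=
  R.powerset.filter fun S => (∀ z ∈ S, (starRingEnd ℂ) z ∈ S) ∧ S.card = m

lemma mem_stableSubsets {R : Finset ℂ} {m : ℕ} {S : Finset ℂ} :
    S ∈ stableSubsets R m ↔ S ⊆ R ∧ (∀ z ∈ S, (starRingEnd ℂ) z ∈ S) ∧ S.card = m := by
  simp [stableSubsets]

open scoped Classical in
lemma filter_union_image_conj {S : Finset ℂ} (hS : ∀ z ∈ S, (starRingEnd ℂ) z ∈ S) :
    S.filter (fun z => z.im = 0) ∪ S.filter (fun z => 0 < z.im) ∪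
      (S.filter (fun z => 0 < z.im)).image (starRingEnd ℂ) = S := by
  ext z
  simp only [Finset.mem_union, Finset.mem_filter, Finset.mem_image]
  constructor
  · rintro ((h | h) | ⟨w, h, rfl⟩)
    · exact h.1
    · exact h.1
    · exact hS _ h.1
  · intro hz
    rcases lt_trichotomy z.im 0 with h | h | h
    · exact Or.inr ⟨_, ⟨hS z hz, by simpa using h⟩, Complex.conj_conj z⟩
    · exact Or.inl (Or.inl ⟨hz, h⟩)
    · exact Or.inl (Or.inr ⟨hz, h⟩)

open scoped Classical in
lemma card_union_image_conj {A B : Finset ℂ} (hA : ∀ z ∈ A, z.im = 0) (hB : ∀ z ∈ B, 0 < z.im) :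
    (A ∪ B ∪ B.image (starRingEnd ℂ)).card = A.card + 2 * B.card := by
  rw [Finset.card_union_of_disjoint, Finset.card_union_of_disjoint,
    Finset.card_image_of_injective _ (starRingEnd ℂ).injective]
  · ring
  · refine Finset.disjoint_left.2 fun z hzA hzB => ?_
    linarith [hA z hzA, hB z hzB]
  · refine Finset.disjoint_left.2 fun z hz hz' => ?_
    obtain ⟨w, hw, rfl⟩ := Finset.mem_image.1 hz'
    have h1 := hB w hw
    rcases Finset.mem_union.1 hz with h | h
    · have := hA _ h
      simp only [Complex.conj_im] at this
      linarith
    · have := hB _ h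
      simp only [Complex.conj_im] at this
      linarith

open scoped Classical in
lemma card_stableSubsets_eq_card_pairs {R : Finset ℂ} (hR : ∀ z ∈ R, (starRingEnd ℂ) z ∈ R)
    (m : ℕ) :
    (stableSubsets R m).card =
      (((R.filter fun z => z.im = 0).powerset ×ˢ (R.filter fun z => 0 < z.im).powerset).filter
        fun P => P.1.card + 2 * P.2.card = m).card := by
  refine Finset.card_nbij'
    (fun S => (S.filter (fun z => z.im = 0), S.filter (fun z => 0 < z.im)))
    (fun P => P.1 ∪ P.2 ∪ P.2.image (starRingEnd ℂ)) ?_ ?_ ?_ ?_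
  · intro S hS
    obtain ⟨hSR, hSc, hSm⟩ := mem_stableSubsets.1 hS
    have h := card_union_image_conj (A := S.filter (fun z => z.im = 0))
      (B := S.filter (fun z => 0 < z.im)) (fun z hz => (Finset.mem_filter.1 hz).2)
      (fun z hz => (Finset.mem_filter.1 hz).2)
    rw [filter_union_image_conj hSc, hSm] at h
    simp only [Finset.coe_filter, Finset.mem_product, Finset.mem_powerset, Set.mem_ofPred_eq]
    exact ⟨⟨Finset.filter_subset_filter _ hSR, Finset.filter_subset_filter _ hSR⟩, h.symm⟩
  · rintro ⟨A, B⟩ hP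
    simp only [Finset.coe_filter, Finset.mem_product, Finset.mem_powerset, Set.mem_ofPred_eq] at hP
    obtain ⟨⟨hA, hB⟩, hm⟩ := hP
    have hA' : ∀ z ∈ A, z.im = 0 := fun z hz => (Finset.mem_filter.1 (hA hz)).2
    have hB' : ∀ z ∈ B, 0 < z.im := fun z hz => (Finset.mem_filter.1 (hB hz)).2
    refine mem_stableSubsets.2 ⟨?_, ?_, by rw [card_union_image_conj hA' hB', hm]⟩
    · intro z hz
      simp only [Finset.mem_union, Finset.mem_image] at hz
      rcases hz with (h | h) | ⟨w, h, rfl⟩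
      · exact (Finset.mem_filter.1 (hA h)).1
      · exact (Finset.mem_filter.1 (hB h)).1
      · exact hR _ (Finset.mem_filter.1 (hB h)).1
    · intro z hz
      simp only [Finset.mem_union, Finset.mem_image] at hz ⊢
      rcases hz with (h | h) | ⟨w, h, rfl⟩
      · rw [Complex.conj_eq_iff_im.2 (hA' z h)]
        exact Or.inl (Or.inl h)
      · exact Or.inr ⟨z, h, rfl⟩
      · rw [Complex.conj_conj]
        exact Or.inl (Or.inr h)
  · intro S hS
    exact filter_union_image_conj (mem_stableSubsets.1 hS).2.1
  · rintro ⟨A, B⟩ hP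
    simp only [Finset.coe_filter, Finset.mem_product, Finset.mem_powerset, Set.mem_ofPred_eq] at hP
    obtain ⟨⟨hA, hB⟩, -⟩ := hP
    have hA' : ∀ z ∈ A, z.im = 0 := fun z hz => (Finset.mem_filter.1 (hA hz)).2
    have hB' : ∀ z ∈ B, 0 < z.im := fun z hz => (Finset.mem_filter.1 (hB hz)).2
    refine Prod.ext ?_ ?_
    · ext z
      simp only [Finset.mem_filter, Finset.mem_union, Finset.mem_image]
      constructor
      · rintro ⟨(h | h) | ⟨w, h, rfl⟩, hz⟩
        · exact h
        · linarith [hB' z h]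
        · have := hB' w h
          simp only [Complex.conj_im] at hz
          linarith
      · exact fun h => ⟨Or.inl (Or.inl h), hA' z h⟩
    · ext z
      simp only [Finset.mem_filter, Finset.mem_union, Finset.mem_image]
      constructor
      · rintro ⟨(h | h) | ⟨w, h, rfl⟩, hz⟩
        · linarith [hA' z h]
        · exact h
        · have := hB' w h
          simp only [Complex.conj_im] at hz
          linarith
      · exact fun h => ⟨Or.inl (Or.inr h), hB' z h⟩

lemma coeff_add_pow_mul_sq_add_sq_pow {α β : Type*} (A : Finset α) (B : Finset β) (m : ℕ) :
    MvPolynomial.coeff (Finsupp.single 0 (A.card + 2 * B.card - m) + Finsupp.single 1 m)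
      (((MvPolynomial.X 0 + MvPolynomial.X 1) ^ A.card *
        (MvPolynomial.X 0 ^ 2 + MvPolynomial.X 1 ^ 2) ^ B.card : MvPolynomial (Fin 2) ℤ)) =
      ((A.powerset ×ˢ B.powerset).filter fun P => P.1.card + 2 * P.2.card = m).card := by
  rw [add_comm (MvPolynomial.X 0), add_comm (MvPolynomial.X 0 ^ 2),
    ← Finset.sum_pow_mul_eq_add_pow, ← Finset.sum_pow_mul_eq_add_pow, Finset.sum_mul_sum,
    ← Finset.sum_product', MvPolynomial.coeff_sum, Finset.card_filter, Nat.cast_sum]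
  refine Finset.sum_congr rfl ?_
  rintro ⟨P, Q⟩ hPQ
  obtain ⟨hP, hQ⟩ := Finset.mem_product.1 hPQ
  have hP' := Finset.card_le_card (Finset.mem_powerset.1 hP)
  have hQ' := Finset.card_le_card (Finset.mem_powerset.1 hQ)
  simp only at hP' hQ' ⊢
  have hmono : (MvPolynomial.X 1 ^ P.card * MvPolynomial.X 0 ^ (A.card - P.card) *
      ((MvPolynomial.X 1 ^ 2) ^ Q.card * (MvPolynomial.X 0 ^ 2) ^ (B.card - Q.card)) :
        MvPolynomial (Fin 2) ℤ) =
      MvPolynomial.monomial (Finsupp.single 0 (A.card + 2 * B.card - (P.card + 2 * Q.card)) +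
        Finsupp.single 1 (P.card + 2 * Q.card)) 1 := by
    rw [MvPolynomial.monomial_single_add, ← MvPolynomial.X_pow_eq_monomial, ← pow_mul, ← pow_mul,
      show A.card + 2 * B.card - (P.card + 2 * Q.card) =
        (A.card - P.card) + 2 * (B.card - Q.card) by omega]
    ring
  rw [hmono, MvPolynomial.coeff_monomial]
  by_cases h : P.card + 2 * Q.card = m
  · rw [if_pos (by rw [h]), if_pos h, Nat.cast_one]
  · rw [if_neg, if_neg h, Nat.cast_zero]
    intro h'
    apply h
    simpa using DFunLike.congr_fun h' 1

lemma card_stableSubsets {R : Finset ℂ} (hR : ∀ z ∈ R, (starRingEnd ℂ) z ∈ R) {m ρ : ℕ}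
    (hρ : (R.filter fun z => z.im = 0).card = ρ) :
    ((stableSubsets R m).card : ℤ) =
      MvPolynomial.coeff (Finsupp.single 0 (R.card - m) + Finsupp.single 1 m)
        (((MvPolynomial.X 0 + MvPolynomial.X 1) ^ ρ *
          (MvPolynomial.X 0 ^ 2 + MvPolynomial.X 1 ^ 2) ^ ((R.card - ρ) / 2) :
            MvPolynomial (Fin 2) ℤ)) := by
  classical
  have hcard := card_union_image_conj (A := R.filter (fun z => z.im = 0))
    (B := R.filter (fun z => 0 < z.im)) (fun z hz => (Finset.mem_filter.1 hz).2)
    (fun z hz => (Finset.mem_filter.1 hz).2)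
  rw [filter_union_image_conj hR] at hcard
  have hU : (R.card - ρ) / 2 = (R.filter (fun z => 0 < z.im)).card := by omega
  rw [hU, ← hρ, hcard, coeff_add_pow_mul_sq_add_sq_pow,
    card_stableSubsets_eq_card_pairs hR]

lemma map_conj_prod_X_sub_C_iff (S : Finset ℂ) :
    (∏ z ∈ S, (X - C z)).map (starRingEnd ℂ) = ∏ z ∈ S, (X - C z) ↔
      ∀ z ∈ S, (starRingEnd ℂ) z ∈ S := by
  classical
  have hmap : (∏ z ∈ S, (X - C z)).map (starRingEnd ℂ) =
      ∏ z ∈ S.image (starRingEnd ℂ), (X - C z) := by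
    rw [Finset.prod_image (starRingEnd ℂ).injective.injOn, Polynomial.map_prod]
    simp
  constructor
  · intro h z hz
    rw [hmap] at h
    have h1 := congrArg roots h
    rw [roots_prod_X_sub_C, roots_prod_X_sub_C, Finset.val_inj] at h1
    exact h1 ▸ Finset.mem_image_of_mem _ hz
  · intro h
    rw [hmap, Finset.eq_of_subset_of_card_le (Finset.image_subset_iff.2 h)
      (Finset.card_image_of_injective _ (starRingEnd ℂ).injective).ge]

lemma prod_X_sub_C_dvd {p : ℂ[X]} (hp : p ≠ 0) {S : Finset ℂ} (hS : S ⊆ p.roots.toFinset) :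
    ∏ z ∈ S, (X - C z) ∣ p := by
  have h : S.val ≤ p.roots :=
    (Multiset.le_iff_subset S.nodup).2 fun z hz => Multiset.mem_toFinset.1 (hS hz)
  exact (Multiset.prod_X_sub_C_dvd_iff_le_roots hp S.val).2 h

lemma Squarefree.exists_eq_prod_X_sub_C {p g : ℂ[X]} (hp : Squarefree p) (hg : g.Monic)
    (hgp : g ∣ p) :
    ∃ S ⊆ p.roots.toFinset, S.card = g.natDegree ∧ g = ∏ z ∈ S, (X - C z) := by
  classical
  have hnd : g.roots.Nodup :=
    nodup_roots (PerfectField.separable_iff_squarefree.2 (hp.squarefree_of_dvd hgp))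
  have hval : g.roots.toFinset.val = g.roots := by simp [hnd.dedup]
  have hsp : g.Splits := IsAlgClosed.splits g
  refine ⟨g.roots.toFinset, Multiset.toFinset_subset.2
    (Multiset.subset_of_le (roots.le_of_dvd hp.ne_zero hgp)), ?_, ?_⟩
  · rw [Finset.card_def, hval, hsp.natDegree_eq_card_roots]
  · rw [Finset.prod, hval]
    exact hsp.eq_prod_roots_of_monic hg

/-- **Counting the real solutions of a real osculating instance of `(□_{k,n}, □^{n−1})`.**
Let `t₁, …, t_{n−1}` be distinct complex numbers stable under conjugation, let
`f = ∏ (t − t_i)`, suppose `f′` is squarefree with exactly `ρ` real roots, and set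
`c = (n−2−ρ)/2`.  Then the number of real `k`-planes `H` with `dim(H ∩ F_{i+1}(∞)) ≥ i`
for `1 ≤ i ≤ k−1` and `H ∩ F_{n−k}(t_i) ≠ 0` for all `i` equals the coefficient of
`x^{n−k−1} y^{k−1}` in `(x+y)^ρ (x²+y²)^c`. -/
theorem real_osculating_count (k n ρ : ℕ) (hk : 1 ≤ k) (hkn : k ≤ n - 1)
    (t : Fin (n - 1) → ℂ) (ht : Function.Injective t)
    (hconj : ∀ i, ∃ j, t j = (starRingEnd ℂ) (t i))
    (f : Polynomial ℂ) (hf : f = ∏ i, (Polynomial.X - Polynomial.C (t i)))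
    (hsf : Squarefree (Polynomial.derivative f))
    (hρ : {z : ℂ | (Polynomial.derivative f).IsRoot z ∧ z.im = 0}.ncard = ρ) :
    ({H : Submodule ℂ (Fin n → ℂ) |
        Module.finrank ℂ H = k ∧ IsRealSubspace H ∧
        (∀ i : ℕ, 1 ≤ i → i ≤ k - 1 →
          i ≤ Module.finrank ℂ ↥(H ⊓ infFlag n (i + 1))) ∧
        (∀ i : Fin (n - 1), H ⊓ oscFlag n (n - k) (t i) ≠ ⊥)}.ncard : ℤ)
      = MvPolynomial.coeff
          (Finsupp.single 0 (n - k - 1) + Finsupp.single 1 (k - 1))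
          (((MvPolynomial.X 0 + MvPolynomial.X 1) ^ ρ *
            (MvPolynomial.X 0 ^ 2 + MvPolynomial.X 1 ^ 2) ^ ((n - 2 - ρ) / 2) :
            MvPolynomial (Fin 2) ℤ)) := by
  classical
  obtain ⟨m, rfl⟩ : ∃ m, k = m + 1 := ⟨k - 1, by omega⟩
  have hn : m + 2 ≤ n := by omega
  have hmon : f.Monic := hf ▸ monic_prod_of_monic _ _ fun i _ => monic_X_sub_C _
  have hfn : f.natDegree = n - 1 := by
    rw [hf, natDegree_prod_of_monic _ _ fun i _ => monic_X_sub_C _]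
    simp
  have hf' : derivative f ≠ 0 := hsf.ne_zero
  have hfc : f.map (starRingEnd ℂ) = f := by
    have h : f = ∏ z ∈ Finset.univ.image t, (X - C z) := by
      rw [hf, Finset.prod_image ht.injOn]
    rw [h, map_conj_prod_X_sub_C_iff]
    simpa using hconj
  have hroots : ∀ z, z ∈ (derivative f).roots.toFinset ↔ (derivative f).IsRoot z := fun z => by
    rw [Multiset.mem_toFinset, mem_roots hf']
  have hstable : ∀ z ∈ (derivative f).roots.toFinset,
      (starRingEnd ℂ) z ∈ (derivative f).roots.toFinset := by
    intro z hz
    rw [hroots] at hz ⊢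
    rw [← hfc, derivative_map]
    exact hz.map
  have hcard : (derivative f).roots.toFinset.card = n - 2 := by
    rw [Multiset.toFinset_card_of_nodup
      (nodup_roots (PerfectField.separable_iff_squarefree.2 hsf)),
      ← (IsAlgClosed.splits (derivative f)).natDegree_eq_card_roots, natDegree_derivative, hfn]
    omega
  have hρ' : ((derivative f).roots.toFinset.filter fun z => z.im = 0).card = ρ := by
    rw [← hρ, ← Set.ncard_coe_finset]
    congr 1
    ext z
    simp only [Finset.coe_filter, hroots, Set.mem_ofPred_eq]
  have hprod : ∀ S ∈ stableSubsets (derivative f).roots.toFinset m,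
      (∏ z ∈ S, (X - C z)).Monic ∧ (∏ z ∈ S, (X - C z)).natDegree = m ∧
        ∏ z ∈ S, (X - C z) ∣ derivative f := by
    intro S hS
    obtain ⟨hSR, -, hSm⟩ := mem_stableSubsets.1 hS
    refine ⟨monic_prod_of_monic _ _ fun i _ => monic_X_sub_C _, ?_, prod_X_sub_C_dvd hf' hSR⟩
    rw [natDegree_prod_of_monic _ _ fun i _ => monic_X_sub_C _]
    simp [hSm]
  have hset : {H : Submodule ℂ (Fin n → ℂ) |
        Module.finrank ℂ H = m + 1 ∧ IsRealSubspace H ∧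
        (∀ i : ℕ, 1 ≤ i → i ≤ m + 1 - 1 →
          i ≤ Module.finrank ℂ ↥(H ⊓ infFlag n (i + 1))) ∧
        (∀ i : Fin (n - 1), H ⊓ oscFlag n (n - (m + 1)) (t i) ≠ ⊥)} =
      (fun S : Finset ℂ => solSpace n m f (∏ z ∈ S, (X - C z))) ''
        (stableSubsets (derivative f).roots.toFinset m : Set (Finset ℂ)) := by
    ext H
    constructor
    · rintro ⟨hH, hreal, hflag, hosc⟩
      have hflag' : m ≤ Module.finrank ℂ ↥(H ⊓ infFlag n (m + 1)) := by
        rcases Nat.eq_zero_or_pos m with rfl | hm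
        · exact Nat.zero_le _
        · exact hflag m hm (by omega)
      obtain ⟨g, hg, hgm, hgf, rfl⟩ := exists_eq_solSpace hn ht hf hH hflag' hosc
      rw [isRealSubspace_solSpace_iff hn hf' hfc hfn hg hgm hgf] at hreal
      obtain ⟨S, hSR, hSm, rfl⟩ := hsf.exists_eq_prod_X_sub_C hg hgf
      exact ⟨S, mem_stableSubsets.2
        ⟨hSR, (map_conj_prod_X_sub_C_iff S).1 hreal, hSm.trans hgm⟩, rfl⟩
    · rintro ⟨S, hS, rfl⟩
      obtain ⟨hg, hgm, hgf⟩ := hprod S hS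
      refine ⟨finrank_solSpace hn hmon hfn hg hgm hgf, ?_,
        fun i _ hi => le_finrank_solSpace_inf_infFlag hn hgm hi,
        fun i => solSpace_inf_oscFlag_ne_bot hn hmon hfn hg hgm hgf ?_⟩
      · rw [isRealSubspace_solSpace_iff hn hf' hfc hfn hg hgm hgf]
        exact (map_conj_prod_X_sub_C_iff S).2 (mem_stableSubsets.1 hS).2.1
      · rw [hf, IsRoot.def, eval_prod]
        exact Finset.prod_eq_zero (Finset.mem_univ i) (by simp)
  have hinj : Set.InjOn (fun S : Finset ℂ => solSpace n m f (∏ z ∈ S, (X - C z)))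
      (stableSubsets (derivative f).roots.toFinset m : Set (Finset ℂ)) := by
    intro S hS S' hS' h
    obtain ⟨hg, hgm, hgf⟩ := hprod S hS
    obtain ⟨hg', hgm', -⟩ := hprod S' hS'
    have h1 := congrArg roots (eq_of_solSpace_eq hn hf' hfn hg hgm hgf hg' hgm' h)
    rwa [roots_prod_X_sub_C, roots_prod_X_sub_C, Finset.val_inj] at h1
  rw [hset, hinj.ncard_image, Set.ncard_coe_finset,
    card_stableSubsets hstable hρ', hcard]
  rw [show n - (m + 1) - 1 = n - 2 - m by omega, Nat.add_sub_cancel]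
end

section
/- Let 1 ≤ k < n and let ρ ≥ 0 be an integer with ρ ≡ n (mod 2), ρ ≤ n−2, and ρ < n−4. Then ν(k,n,ρ) ≤ ν(k,n,ρ+2). [Monotonicity of the real factorization counts, from the Remark following Corollary 6: ν(k,n,ρ_□ − 1) is the lower bound for the number of real solutions of osculation type ρ_□.] -/
/-- `ν(k, n, ρ)`: the coefficient of `x^{n−k−1} y^{k−1}` in the polynomial
`(x+y)^ρ (x²+y²)^c ∈ ℤ[x,y]`, where `c = (n−2−ρ)/2`. -/
noncomputable def nu (k n ρ : ℕ) : ℤ :=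
  MvPolynomial.coeff (Finsupp.single 0 (n - k - 1) + Finsupp.single 1 (k - 1))
    (((MvPolynomial.X 0 + MvPolynomial.X 1) ^ ρ *
      (MvPolynomial.X 0 ^ 2 + MvPolynomial.X 1 ^ 2) ^ ((n - 2 - ρ) / 2) :
      MvPolynomial (Fin 2) ℤ))

/-- **Monotonicity of the real factorization counts.** For `1 ≤ k < n` and
`ρ ≡ n (mod 2)` with `ρ ≤ n−2` and `ρ < n−4`, we have `ν(k,n,ρ) ≤ ν(k,n,ρ+2)`. -/
theorem nu_monotone (k n ρ : ℕ) (hk : 1 ≤ k) (hkn : k < n)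
    (hpar : ρ % 2 = n % 2) (hle : ρ ≤ n - 2) (hlt : ρ < n - 4) :
    nu k n ρ ≤ nu k n (ρ + 2) := by
  obtain ⟨c, hc⟩ : ∃ c, (n - 2 - ρ) / 2 = c + 1 := ⟨(n - 2 - ρ) / 2 - 1, by omega⟩
  have hc' : (n - 2 - (ρ + 2)) / 2 = c := by omega
  unfold nu
  rw [hc, hc', ← sub_nonneg, ← MvPolynomial.coeff_sub]
  have hdiff : ((MvPolynomial.X 0 + MvPolynomial.X 1) ^ (ρ + 2) *
        (MvPolynomial.X 0 ^ 2 + MvPolynomial.X 1 ^ 2) ^ c -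
      (MvPolynomial.X 0 + MvPolynomial.X 1) ^ ρ *
        (MvPolynomial.X 0 ^ 2 + MvPolynomial.X 1 ^ 2) ^ (c + 1) : MvPolynomial (Fin 2) ℤ) =
      MvPolynomial.map (Nat.castRingHom ℤ)
        (2 * MvPolynomial.X 0 * MvPolynomial.X 1 * (MvPolynomial.X 0 + MvPolynomial.X 1) ^ ρ *
          (MvPolynomial.X 0 ^ 2 + MvPolynomial.X 1 ^ 2) ^ c) := by
    simp only [map_mul, map_add, map_pow, map_ofNat, MvPolynomial.map_X]
    ring
  rw [hdiff, MvPolynomial.coeff_map]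
  exact Int.natCast_nonneg _
end

section
/- Let 1 ≤ k < n and let ρ ≥ 0 be an integer with ρ ≡ n (mod 2) and ρ ≤ n−2. Then binom(⌊(n−2)/2⌋ ; ⌊(k−1)/2⌋, ⌊(n−k−1)/2⌋) ≤ ν(k,n,ρ) ≤ binom(n−2, k−1), where the multinomial coefficient binom(N; a, b) is defined to be N!/(a!·b!) if a + b = N and 0 otherwise. [The two-sided bounds on the numbers of real factorizations from the Remark following Corollary 6.] -/
/-- The multinomial coefficient `binom(N; a, b) = N!/(a!·b!)` if `a + b = N`,
and `0` otherwise. -/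
def multinom (N a b : ℕ) : ℕ :=
  if a + b = N then N.factorial / (a.factorial * b.factorial) else 0

open MvPolynomial

/-- The integer polynomials all of whose coefficients are nonnegative. -/
def nonnegCoeffs (σ : Type*) : Subsemiring (MvPolynomial σ ℤ) where
  carrier := {p | ∀ m, 0 ≤ coeff m p}
  zero_mem' m := by simp
  one_mem' m := by
    classical
    rw [coeff_one]
    split_ifs <;> simp
  add_mem' hp hq m := by
    rw [coeff_add]
    exact add_nonneg (hp m) (hq m)
  mul_mem' hp hq m := by
    classical
    rw [coeff_mul]
    exact Finset.sum_nonneg fun x _ => mul_nonneg (hp x.1) (hq x.2)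

theorem X_mem_nonnegCoeffs {σ : Type*} (i : σ) : X i ∈ nonnegCoeffs σ := fun m => by
  classical
  rw [coeff_X]
  split_ifs <;> simp

theorem coeff_le_of_sub_mem {σ : Type*} {p q : MvPolynomial σ ℤ}
    (h : q - p ∈ nonnegCoeffs σ) (m : σ →₀ ℕ) : coeff m p ≤ coeff m q := by
  have := h m
  rw [coeff_sub] at this
  exact sub_nonneg.mp this

section Subsemiring

variable {A : Type*} [CommRing A] {R : Subsemiring A}

theorem mul_sub_mul_mem {p q r s : A} (hqp : q - p ∈ R) (hsr : s - r ∈ R)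
    (hq : q ∈ R) (hr : r ∈ R) : q * s - p * r ∈ R := by
  have := R.add_mem (R.mul_mem hq hsr) (R.mul_mem hqp hr)
  convert this using 1
  ring

theorem pow_sub_pow_mem {p q : A} (hqp : q - p ∈ R) (hp : p ∈ R) (hq : q ∈ R) (c : ℕ) :
    q ^ c - p ^ c ∈ R := by
  induction c with
  | zero => simp
  | succ c ih =>
    rw [pow_succ, pow_succ]
    exact mul_sub_mul_mem ih hqp (pow_mem hq c) hp

theorem add_pow_sub_term_mem {p q : A} (hp : p ∈ R) (hq : q ∈ R) (i j : ℕ) :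
    (p + q) ^ (i + j) - p ^ i * q ^ j * ((i + j).choose i : A) ∈ R := by
  have hmem : i ∈ Finset.range (i + j + 1) := Finset.mem_range.mpr (by omega)
  rw [add_pow, ← Finset.add_sum_erase _ _ hmem, Nat.add_sub_cancel_left, add_sub_cancel_left]
  exact R.sum_mem fun m _ =>
    R.mul_mem (R.mul_mem (pow_mem hp m) (pow_mem hq _)) (natCast_mem R _)

end Subsemiring

/-- `(x + y) ^ 2` dominates `x ^ 2 + y ^ 2` coefficientwise, hence so do powers. -/
theorem add_sq_pow_sub_mem (c : ℕ) :
    (((X 0 + X 1) ^ 2) ^ c - (X 0 ^ 2 + X 1 ^ 2) ^ c : MvPolynomial (Fin 2) ℤ) ∈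
      nonnegCoeffs (Fin 2) := by
  have h0 := X_mem_nonnegCoeffs (0 : Fin 2)
  have h1 := X_mem_nonnegCoeffs (1 : Fin 2)
  refine pow_sub_pow_mem ?_ (add_mem (pow_mem h0 2) (pow_mem h1 2))
    (pow_mem (add_mem h0 h1) 2) c
  convert add_mem (mul_mem h0 h1) (mul_mem h0 h1) using 1
  ring

theorem coeff_add_pow_mul_sq_add_sq_pow_le (ρ c i j : ℕ) (h : i + j = ρ + 2 * c) :
    coeff (Finsupp.single 0 i + Finsupp.single 1 j)
      ((X 0 + X 1) ^ ρ * (X 0 ^ 2 + X 1 ^ 2) ^ c : MvPolynomial (Fin 2) ℤ) ≤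
      ((i + j).choose j : ℤ) := by
  have h0 := X_mem_nonnegCoeffs (0 : Fin 2)
  have h1 := X_mem_nonnegCoeffs (1 : Fin 2)
  have key := coeff_le_of_sub_mem (m := Finsupp.single 0 i + Finsupp.single 1 j)
    (mul_sub_mul_mem (p := (X 0 + X 1) ^ ρ) (q := (X 0 + X 1) ^ ρ) (by simp)
      (add_sq_pow_sub_mem c) (pow_mem (add_mem h0 h1) ρ)
      (pow_mem (add_mem (pow_mem h0 2) (pow_mem h1 2)) c))
  rw [← pow_mul, ← pow_add, coeff_add_pow] at key
  simpa [h, Nat.choose_symm_of_eq_add h.symm] using key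

theorem monomial_fin_two_natCast (i j t : ℕ) :
    monomial (Finsupp.single (0 : Fin 2) i + Finsupp.single 1 j) (t : ℤ) =
      X 0 ^ i * X 1 ^ j * (t : MvPolynomial (Fin 2) ℤ) := by
  rw [X_pow_eq_monomial, X_pow_eq_monomial, monomial_mul, ← map_natCast C,
    mul_comm (monomial _ _), C_mul_monomial]
  simp

theorem choose_le_coeff_add_pow_mul_sq_add_sq_pow (m c a b d e : ℕ) (h : b + a = m + c) :
    ((b + a).choose b : ℤ) ≤ coeff (Finsupp.single 0 (d + 2 * b) + Finsupp.single 1 (e + 2 * a))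
      ((X 0 + X 1) ^ (d + e + 2 * m) * (X 0 ^ 2 + X 1 ^ 2) ^ c : MvPolynomial (Fin 2) ℤ) := by
  have h0 := X_mem_nonnegCoeffs (0 : Fin 2)
  have h1 := X_mem_nonnegCoeffs (1 : Fin 2)
  have hs := add_mem (pow_mem h0 2) (pow_mem h1 2)
  have hlin := add_pow_sub_term_mem h0 h1 d e
  have hquad := add_pow_sub_term_mem (pow_mem h0 2) (pow_mem h1 2) b a
  have hterms := mul_sub_mul_mem hlin hquad (pow_mem (add_mem h0 h1) _)
    (mul_mem (mul_mem (pow_mem (pow_mem h0 2) b) (pow_mem (pow_mem h1 2) a)) (natCast_mem _ _))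
  have hpow := mul_mem (mul_mem (pow_mem (add_mem h0 h1) (d + e)) (add_sq_pow_sub_mem m))
    (pow_mem hs c)
  have hsum := add_mem hpow hterms
  have hle := coeff_le_of_sub_mem
    (m := Finsupp.single (0 : Fin 2) (d + 2 * b) + Finsupp.single 1 (e + 2 * a))
    (q := (X 0 + X 1) ^ (d + e + 2 * m) * (X 0 ^ 2 + X 1 ^ 2) ^ c)
    (p := monomial (Finsupp.single (0 : Fin 2) (d + 2 * b) + Finsupp.single 1 (e + 2 * a))
      (((d + e).choose d * (b + a).choose b : ℕ) : ℤ)) (by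
        convert hsum using 1
        rw [monomial_fin_two_natCast, h, ← pow_mul (X 0 + X 1)]
        push_cast
        ring)
  rw [coeff_monomial, if_pos rfl] at hle
  refine le_trans ?_ hle
  exact_mod_cast Nat.le_mul_of_pos_left _ (Nat.choose_pos (Nat.le_add_right d e))

/-- **Two-sided bounds on the real factorization counts.** For `1 ≤ k < n` and
`ρ ≡ n (mod 2)` with `ρ ≤ n−2`,
`binom(⌊(n−2)/2⌋; ⌊(k−1)/2⌋, ⌊(n−k−1)/2⌋) ≤ ν(k,n,ρ) ≤ binom(n−2, k−1)`. -/
theorem nu_bounds (k n ρ : ℕ) (hk : 1 ≤ k) (hkn : k < n)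
    (hpar : ρ % 2 = n % 2) (hle : ρ ≤ n - 2) :
    (multinom ((n - 2) / 2) ((k - 1) / 2) ((n - k - 1) / 2) : ℤ) ≤ nu k n ρ ∧
      nu k n ρ ≤ ((n - 2).choose (k - 1) : ℤ) := by
  have h0 := X_mem_nonnegCoeffs (0 : Fin 2)
  have h1 := X_mem_nonnegCoeffs (1 : Fin 2)
  constructor
  · unfold multinom
    split_ifs with h
    · have hle := choose_le_coeff_add_pow_mul_sq_add_sq_pow (ρ / 2) ((n - 2 - ρ) / 2)
        ((k - 1) / 2) ((n - k - 1) / 2) ((n - k - 1) % 2) ((k - 1) % 2) (by omega)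
      rw [Nat.mod_add_div, Nat.mod_add_div,
        show (n - k - 1) % 2 + (k - 1) % 2 + 2 * (ρ / 2) = ρ by omega, add_comm ((n - k - 1) / 2),
        Nat.add_choose] at hle
      rw [← h]
      exact hle
    · exact mul_mem (pow_mem (add_mem h0 h1) _)
        (pow_mem (add_mem (pow_mem h0 2) (pow_mem h1 2)) _) _
  · have hle := coeff_add_pow_mul_sq_add_sq_pow_le ρ ((n - 2 - ρ) / 2) (n - k - 1) (k - 1)
      (by omega)
    rwa [show n - k - 1 + (k - 1) = n - 2 by omega] at hle
end

section
/- Let n ≥ 3, r ≥ 2, and let a₁,…,a_r ≥ 1 be integers with a₁ + ⋯ + a_r = 2(n−2). Then K_{n−2}(a₁,…,a_r) = K_{n−2}(a₁,…,a_{r−2}, a_{r−1}+a_r) + K_{n−3}(a₁,…,a_{r−2}, a_{r−1}−1, a_r−1). [Schubert's recursion (formula (11)) for the numbers of solutions of special Schubert problems on Gr(2,n).] -/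
/-- The two-row Kostka number `K_m(a)` for a sequence `a = (a₁, …, a_r)` of integers:
the number of semistandard Young tableaux of rectangular shape `(m, m)` (two rows of
length `m`, rows weakly increasing, columns strictly increasing) with entries in
`{1, …, r}` (encoded as `Fin a.length`) in which the entry `i` occurs exactly `a_i`
times.  If some `a_i < 0` or `a₁ + ⋯ + a_r ≠ 2m`, no such tableau exists and
`K_m(a) = 0`. -/
noncomputable def Kostka (m : ℕ) (a : List ℤ) : ℕ :=
  Set.ncard {T : Fin 2 → Fin m → Fin a.length |
    (∀ p, Monotone (T p)) ∧
    (∀ q, T 0 q < T 1 q) ∧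
    (∀ i : Fin a.length, a.get i =
      (((Finset.univ : Finset (Fin 2 × Fin m)).filter
        fun pq => T pq.1 pq.2 = i).card : ℤ))}

/-- Number of occurrences of the letter `i` in the row `u`. -/
def rowCount {m : ℕ} (u : Fin m → ℕ) (i : ℕ) : ℕ :=
  (Finset.univ.filter fun q => u q = i).card

/-- Semistandard tableaux of shape `(m, m)` with entries in `ℕ` and content `f`, as pairs of rows. -/
def twoRowTableaux (m : ℕ) (f : ℕ → ℤ) : Set ((Fin m → ℕ) × (Fin m → ℕ)) :=
  {T | Monotone T.1 ∧ Monotone T.2 ∧ (∀ q, T.1 q < T.2 q) ∧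
    ∀ i, f i = (rowCount T.1 i + rowCount T.2 i : ℕ)}

lemma rowCount_pos {m : ℕ} (u : Fin m → ℕ) (q : Fin m) : 0 < rowCount u (u q) :=
  Finset.card_pos.mpr ⟨q, by simp⟩

lemma rowCount_snoc {m : ℕ} (u : Fin m → ℕ) (c i : ℕ) :
    rowCount (Fin.snoc u c : Fin (m + 1) → ℕ) i = rowCount u i + if c = i then 1 else 0 := by
  simp only [rowCount, Finset.card_filter, Fin.sum_univ_castSucc, Fin.snoc_castSucc, Fin.snoc_last]

lemma rowCount_eq_zero {m : ℕ} {u : Fin m → ℕ} {i : ℕ} (h : ∀ q, u q ≠ i) : rowCount u i = 0 := by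
  simp [rowCount, h]

lemma card_filter_fin_two_prod {m : ℕ} (P : Fin 2 → Fin m → Prop) [∀ p q, Decidable (P p q)] :
    ((Finset.univ : Finset (Fin 2 × Fin m)).filter fun pq => P pq.1 pq.2).card =
      (Finset.univ.filter fun q => P 0 q).card + (Finset.univ.filter fun q => P 1 q).card := by
  simp only [Finset.card_filter, Fintype.sum_prod_type, Fin.sum_univ_two]

lemma twoRowTableaux_entry_ne {m : ℕ} {f : ℕ → ℤ} {T : (Fin m → ℕ) × (Fin m → ℕ)}
    (hT : T ∈ twoRowTableaux m f) {i : ℕ} (hi : f i = 0) (q : Fin m) :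
    T.1 q ≠ i ∧ T.2 q ≠ i := by
  have h := hT.2.2.2 i
  constructor
  · rintro rfl
    have := rowCount_pos T.1 q
    omega
  · rintro rfl
    have := rowCount_pos T.2 q
    omega

/-- The rows of a filling by `Fin r`, with entries read as natural numbers. -/
def fillingRows (m r : ℕ) (T : Fin 2 → Fin m → Fin r) : (Fin m → ℕ) × (Fin m → ℕ) :=
  (fun q => T 0 q, fun q => T 1 q)

lemma fillingRows_injective (m r : ℕ) : Function.Injective (fillingRows m r) := by
  intro T T' h
  simp only [fillingRows, Prod.mk.injEq, funext_iff] at h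
  funext p q
  apply Fin.ext
  fin_cases p
  · exact h.1 q
  · exact h.2 q

lemma image_fillingRows (m : ℕ) (a : List ℤ) :
    fillingRows m a.length '' {T : Fin 2 → Fin m → Fin a.length |
      (∀ p, Monotone (T p)) ∧ (∀ q, T 0 q < T 1 q) ∧
      (∀ i : Fin a.length, a.get i =
        (((Finset.univ : Finset (Fin 2 × Fin m)).filter
          fun pq => T pq.1 pq.2 = i).card : ℤ))} = twoRowTableaux m (fun i => a.getD i 0) := by
  ext ⟨u, v⟩
  constructor
  · rintro ⟨T, ⟨hmono, hcol, hcount⟩, hT⟩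
    obtain ⟨rfl, rfl⟩ := Prod.mk.inj hT
    refine ⟨fun i j hij => hmono 0 hij, fun i j hij => hmono 1 hij, hcol, fun i => ?_⟩
    by_cases hi : i < a.length
    · have h := hcount ⟨i, hi⟩
      rw [card_filter_fin_two_prod (fun p q => T p q = ⟨i, hi⟩)] at h
      simpa [rowCount, Fin.ext_iff, hi] using h
    · have h0 := rowCount_eq_zero (u := fun q => (T 0 q : ℕ)) (i := i) (fun q => by omega)
      have h1 := rowCount_eq_zero (u := fun q => (T 1 q : ℕ)) (i := i) (fun q => by omega)
      simp [h0, h1, List.getD, List.getElem?_eq_none (not_lt.mp hi)]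
  · intro h
    have hlt : ∀ q, u q < a.length ∧ v q < a.length := by
      intro q
      constructor
      · by_contra hc
        exact (twoRowTableaux_entry_ne h (i := u q)
          (by simp [List.getD, List.getElem?_eq_none (not_lt.mp hc)]) q).1 rfl
      · by_contra hc
        exact (twoRowTableaux_entry_ne h (i := v q)
          (by simp [List.getD, List.getElem?_eq_none (not_lt.mp hc)]) q).2 rfl
    obtain ⟨hu, hv, hcol, hcount⟩ := h
    refine ⟨![fun q => ⟨u q, (hlt q).1⟩, fun q => ⟨v q, (hlt q).2⟩], ⟨?_, hcol, ?_⟩, rfl⟩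
    · intro p
      fin_cases p
      · exact fun i j hij => hu hij
      · exact fun i j hij => hv hij
    · intro i
      rw [card_filter_fin_two_prod (fun p q =>
        (![fun q => ⟨u q, (hlt q).1⟩, fun q => ⟨v q, (hlt q).2⟩] :
          Fin 2 → Fin m → Fin a.length) p q = i)]
      simpa [rowCount, Fin.ext_iff] using hcount i

lemma kostka_eq_ncard_twoRowTableaux (m : ℕ) (a : List ℤ) :
    Kostka m a = (twoRowTableaux m fun i => a.getD i 0).ncard := by
  rw [← image_fillingRows, Set.ncard_image_of_injective _ (fillingRows_injective _ _), Kostka]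

lemma finite_twoRowTableaux (m : ℕ) (a : List ℤ) :
    (twoRowTableaux m fun i => a.getD i 0).Finite := by
  rw [← image_fillingRows]
  exact (Set.toFinite _).image _

/-- The largest letter of a weakly increasing row fills its end. -/
lemma eq_top_iff_of_monotone {m k : ℕ} {v : Fin m → ℕ} (hv : Monotone v) (hk : ∀ q, v q ≤ k)
    (q : Fin m) : v q = k ↔ m ≤ q + rowCount v k := by
  constructor
  · intro h
    have hsub : Finset.Ici q ⊆ Finset.univ.filter fun q => v q = k := by
      intro j hj
      have := hv (Finset.mem_Ici.mp hj)
      have := hk j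
      simp only [Finset.mem_filter, Finset.mem_univ, true_and]
      omega
    have := Finset.card_le_card hsub
    rw [Fin.card_Ici] at this
    unfold rowCount
    omega
  · intro h
    by_contra hne
    have hsub : (Finset.univ.filter fun q => v q = k) ⊆ Finset.Ioi q := by
      intro j hj
      simp only [Finset.mem_filter, Finset.mem_univ, true_and] at hj
      rw [Finset.mem_Ioi]
      by_contra hc
      have := hv (not_lt.mp hc)
      have := hk q
      omega
    have := Finset.card_le_card hsub
    rw [Fin.card_Ioi] at this
    unfold rowCount at h
    omega

lemma card_filter_le_add {m c : ℕ} (hc : c ≤ m) :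
    (Finset.univ.filter fun q : Fin m => m ≤ q + c).card = c := by
  have h : (Finset.univ.filter fun q : Fin m => m ≤ q + c).card =
      ((Finset.range m).filter fun q => m ≤ q + c).card := by
    rw [Finset.card_filter, Finset.card_filter, Finset.sum_range]
  have h2 : ((Finset.range m).filter fun q => m ≤ q + c) = Finset.Ico (m - c) m := by
    ext q
    simp only [Finset.mem_filter, Finset.mem_range, Finset.mem_Ico]
    omega
  rw [h, h2, Nat.card_Ico]
  omega

lemma monotone_snoc {m c : ℕ} {u : Fin m → ℕ} (hu : Monotone u) (hc : ∀ q, u q ≤ c) :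
    Monotone (Fin.snoc u c : Fin (m + 1) → ℕ) := by
  intro i j hij
  induction j using Fin.lastCases with
  | last =>
    induction i using Fin.lastCases with
    | last => exact le_rfl
    | cast i => simpa using hc i
  | cast j =>
    induction i using Fin.lastCases with
    | last => exact absurd hij (not_le.mpr (Fin.castSucc_lt_last j))
    | cast i => simpa using hu (Fin.castSucc_le_castSucc_iff.mp hij)

section Recursion

variable {m k : ℕ} {f : ℕ → ℤ}

lemma twoRowTableaux_entry_le (hf : ∀ i, k < i → f i = 0)
    {T : (Fin m → ℕ) × (Fin m → ℕ)} (hT : T ∈ twoRowTableaux m f) (q : Fin m) :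
    T.1 q < k ∧ T.2 q ≤ k := by
  have hcol := hT.2.2.1 q
  have : T.2 q ≤ k := by
    by_contra hc
    exact (twoRowTableaux_entry_ne hT (hf _ (not_le.mp hc)) q).2 rfl
  omega

/-- Removing a last column `(k, k + 1)`. -/
lemma ncard_twoRowTableaux_last_eq {f' : ℕ → ℤ} (hf : ∀ i, k + 1 < i → f i = 0)
    (hlt : ∀ i, i ≠ k → i ≠ k + 1 → f' i = f i) (hk : f' k = f k - 1)
    (hk' : f' (k + 1) = f (k + 1) - 1) :
    {T ∈ twoRowTableaux (m + 1) f | T.1 (Fin.last m) = k}.ncard =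
      (twoRowTableaux m f').ncard := by
  have hinj : Function.Injective (fun T : (Fin m → ℕ) × (Fin m → ℕ) =>
      ((Fin.snoc T.1 k, Fin.snoc T.2 (k + 1)) : (Fin (m + 1) → ℕ) × (Fin (m + 1) → ℕ))) := by
    rintro ⟨u, v⟩ ⟨u', v'⟩ h
    simp only [Prod.mk.injEq, Fin.snoc_inj] at h
    simp [h.1.1, h.2.1]
  rw [← Set.ncard_image_of_injective _ hinj]
  congr 1
  ext ⟨u, v⟩
  constructor
  · rintro ⟨hT, hlast⟩
    have hle := twoRowTableaux_entry_le hf hT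
    obtain ⟨hu, hv, hcol, hcount⟩ := hT
    dsimp only at *
    have hlast' : v (Fin.last m) = k + 1 := by
      have := hcol (Fin.last m)
      have := (hle (Fin.last m)).2
      omega
    have eu : (Fin.snoc (Fin.init u) k : Fin (m + 1) → ℕ) = u := by
      rw [← hlast]; exact Fin.snoc_init_self u
    have ev : (Fin.snoc (Fin.init v) (k + 1) : Fin (m + 1) → ℕ) = v := by
      rw [← hlast']; exact Fin.snoc_init_self v
    refine ⟨(Fin.init u, Fin.init v), ⟨?_, ?_, ?_, ?_⟩, ?_⟩
    · exact fun i j hij => hu (Fin.castSucc_le_castSucc_iff.mpr hij)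
    · exact fun i j hij => hv (Fin.castSucc_le_castSucc_iff.mpr hij)
    · exact fun q => hcol _
    · intro i
      have h := hcount i
      rw [← eu, ← ev, rowCount_snoc, rowCount_snoc] at h
      dsimp only
      by_cases h1 : i = k
      · subst h1
        simp at h
        omega
      by_cases h2 : i = k + 1
      · subst h2
        simp at h
        omega
      rw [if_neg (Ne.symm h1), if_neg (Ne.symm h2)] at h
      rw [hlt i h1 h2]
      simpa using h
    · simp only [eu, ev]
  · rintro ⟨⟨u', v'⟩, hT, h⟩
    obtain ⟨rfl, rfl⟩ := Prod.mk.inj h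
    have hle := twoRowTableaux_entry_le (k := k + 1)
      (fun i hi => by rw [hlt i (by omega) (by omega), hf i hi]) hT
    obtain ⟨hu, hv, hcol, hcount⟩ := hT
    dsimp only at *
    refine ⟨⟨?_, ?_, ?_, ?_⟩, ?_⟩
    · exact monotone_snoc hu fun q => Nat.lt_succ_iff.mp (hle q).1
    · exact monotone_snoc hv fun q => (hle q).2
    · intro q
      induction q using Fin.lastCases with
      | last => simp
      | cast q => simpa using hcol q
    · intro i
      have h := hcount i
      dsimp only
      rw [rowCount_snoc, rowCount_snoc]
      by_cases h1 : i = k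
      · subst h1
        simp
        omega
      by_cases h2 : i = k + 1
      · subst h2
        simp
        omega
      rw [if_neg (Ne.symm h1), if_neg (Ne.symm h2), ← hlt i h1 h2]
      simpa using h
    · simp

lemma rowCount_min_of_lt (v : Fin m → ℕ) {i : ℕ} (hi : i < k) :
    rowCount (fun q => min (v q) k) i = rowCount v i := by
  unfold rowCount
  congr 1
  ext q
  simp only [Finset.mem_filter, Finset.mem_univ, true_and]
  omega

lemma rowCount_min_self {v : Fin m → ℕ} (hv : ∀ q, v q ≤ k + 1) :
    rowCount (fun q => min (v q) k) k = rowCount v k + rowCount v (k + 1) := by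
  simp only [rowCount, Finset.card_filter, ← Finset.sum_add_distrib]
  refine Finset.sum_congr rfl fun q _ => ?_
  have := hv q
  split_ifs <;> omega

/-- Merging the letters `k` and `k + 1` when both occur in the second row only. -/
lemma ncard_twoRowTableaux_last_ne {f' : ℕ → ℤ} (hf : ∀ i, k + 1 < i → f i = 0)
    (hx : 0 ≤ f k) (hy : 0 ≤ f (k + 1))
    (hlt : ∀ i, i < k → f' i = f i) (hk : f' k = f k + f (k + 1)) (hf' : ∀ i, k < i → f' i = 0) :
    {T ∈ twoRowTableaux (m + 1) f | T.1 (Fin.last m) ≠ k}.ncard =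
      (twoRowTableaux (m + 1) f').ncard := by
  have hfirst : ∀ T ∈ {T ∈ twoRowTableaux (m + 1) f | T.1 (Fin.last m) ≠ k},
      ∀ q, T.1 q < k := by
    rintro T ⟨hT, hlast⟩ q
    have h1 := (twoRowTableaux_entry_le hf hT (Fin.last m)).1
    have h2 := hT.1 (Fin.le_last q)
    omega
  refine Set.ncard_congr (fun T _ => (T.1, fun q => min (T.2 q) k)) ?_ ?_ ?_
  · rintro ⟨u, v⟩ hT
    have hu_lt := hfirst _ hT
    have hle := twoRowTableaux_entry_le hf hT.1
    obtain ⟨⟨hu, hv, hcol, hcount⟩, -⟩ := hT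
    dsimp only at *
    refine ⟨hu, fun i j hij => min_le_min_right k (hv hij),
      fun q => lt_min (hcol q) (hu_lt q), fun i => ?_⟩
    dsimp only
    rcases lt_trichotomy i k with hi | rfl | hi
    · rw [rowCount_min_of_lt v hi, hlt i hi, hcount i]
    · have h0 := rowCount_eq_zero (u := u) (i := i + 1) (fun q => by have := hu_lt q; omega)
      rw [rowCount_min_self fun q => (hle q).2, hk, hcount i, hcount (i + 1), h0]
      push_cast
      ring
    · rw [hf' i hi, rowCount_eq_zero (fun q => by have := hu_lt q; omega),
        rowCount_eq_zero (fun q => by omega)]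
      rfl
  · rintro ⟨u, v⟩ ⟨u', v'⟩ hT hT' h
    obtain ⟨rfl, hmin⟩ := Prod.mk.inj h
    have hu_lt := hfirst _ hT
    have hle := twoRowTableaux_entry_le hf hT.1
    have hle' := twoRowTableaux_entry_le hf hT'.1
    have hcount := hT.1.2.2.2 (k + 1)
    have hcount' := hT'.1.2.2.2 (k + 1)
    have htop := eq_top_iff_of_monotone hT.1.2.1 fun q => (hle q).2
    have htop' := eq_top_iff_of_monotone hT'.1.2.1 fun q => (hle' q).2
    dsimp only at *
    have hc : rowCount v (k + 1) = rowCount v' (k + 1) := by omega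
    congr 1
    funext q
    have h1 := congrFun hmin q
    have h2 := htop q
    have h3 := htop' q
    rw [← hc] at h3
    have h4 := h2.trans h3.symm
    have := (hle q).2
    have := (hle' q).2
    omega
  · rintro ⟨u, v⟩ hT
    have hle := twoRowTableaux_entry_le hf' hT
    obtain ⟨hu, hv, hcol, hcount⟩ := hT
    dsimp only at *
    obtain ⟨c, hc⟩ := Int.eq_ofNat_of_zero_le hy
    have hu0 : ∀ i, k ≤ i → rowCount u i = 0 := fun i hi =>
      rowCount_eq_zero fun q => by have := (hle q).1; omega
    have hkcount := hcount k
    rw [hu0 k le_rfl, hk, hc] at hkcount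
    have hcm : c ≤ m + 1 := by
      have : rowCount v k ≤ m + 1 := (Finset.card_le_univ _).trans (by simp)
      omega
    have htop : ∀ q : Fin (m + 1), m + 1 ≤ q + c → v q = k := fun q hq =>
      (eq_top_iff_of_monotone hv (fun q => (hle q).2) q).mpr (by omega)
    set w : Fin (m + 1) → ℕ := fun q => if m + 1 ≤ (q : ℕ) + c then k + 1 else v q with hw
    have hwle : ∀ q, w q ≤ k + 1 := fun q => by
      have := (hle q).2
      simp only [hw]
      split_ifs <;> omega
    have hmin : (fun q => min (w q) k) = v := by
      funext q
      have := (hle q).2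
      have := htop q
      simp only [hw]
      split_ifs <;> omega
    have hwtop : rowCount w (k + 1) = c := by
      rw [← card_filter_le_add hcm, rowCount]
      congr 1
      ext q
      have := (hle q).2
      simp only [hw, Finset.mem_filter, Finset.mem_univ, true_and]
      split_ifs <;> omega
    refine ⟨(u, w), ⟨⟨hu, fun i j hij => ?_, fun q => ?_, fun i => ?_⟩, ?_⟩, ?_⟩
    · have h1 := hv hij
      have h2 : (i : ℕ) ≤ j := hij
      have := (hle i).2
      simp only [hw]
      split_ifs <;> omega
    · have := hcol q
      have := (hle q).1
      simp only [hw]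
      split_ifs <;> omega
    · dsimp only
      rcases lt_or_ge i k with hi | hi
      · rw [← hlt i hi, hcount i, ← rowCount_min_of_lt w hi, hmin]
      rw [hu0 i hi]
      rcases hi.eq_or_lt with rfl | hi
      · have := rowCount_min_self hwle
        rw [hmin] at this
        omega
      rcases (Nat.succ_le_of_lt hi).eq_or_lt with rfl | hi
      · rw [Nat.succ_eq_add_one, hwtop, hc]
        simp
      · rw [hf i hi, rowCount_eq_zero fun q => by have := hwle q; omega]
        rfl
    · exact (hle _).1.ne
    · simp only [hmin]

end Recursion

/-- **Schubert's recursion for special Schubert problems on `Gr(2, n)`.**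
For `n ≥ 3` and positive integers `a₁, …, a_r` (here `a = b ++ [x, y]`, so `r ≥ 2`)
with `a₁ + ⋯ + a_r = 2(n−2)`:
`K_{n−2}(a₁,…,a_r) = K_{n−2}(a₁,…,a_{r−2}, a_{r−1}+a_r) + K_{n−3}(a₁,…,a_{r−2}, a_{r−1}−1, a_r−1)`. -/
theorem schubert_recursion (n : ℕ) (hn : 3 ≤ n) (b : List ℤ) (x y : ℤ)
    (hpos : ∀ z ∈ b ++ [x, y], 1 ≤ z)
    (hsum : (b ++ [x, y]).sum = 2 * ((n : ℤ) - 2)) :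
    Kostka (n - 2) (b ++ [x, y]) =
      Kostka (n - 2) (b ++ [x + y]) + Kostka (n - 3) (b ++ [x - 1, y - 1]) := by
  obtain ⟨m, rfl⟩ : ∃ m, n = m + 3 := ⟨n - 3, by omega⟩
  have hx : 1 ≤ x := hpos x (by simp)
  have hy : 1 ≤ y := hpos y (by simp)
  have hlt : ∀ (l l' : List ℤ) (i : ℕ), i < b.length → (b ++ l).getD i 0 = (b ++ l').getD i 0 :=
    fun l l' i hi => by rw [List.getD_append _ _ _ _ hi, List.getD_append _ _ _ _ hi]
  have hzero : ∀ (l : List ℤ) (i : ℕ), b.length + l.length ≤ i → (b ++ l).getD i 0 = 0 :=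
    fun l i hi => List.getD_eq_default _ _ (by simpa using hi)
  have hfst : ∀ (z : ℤ) (l : List ℤ), (b ++ z :: l).getD b.length 0 = z := by simp
  have hsnd : ∀ z w : ℤ, (b ++ [z, w]).getD (b.length + 1) 0 = w := fun z w => by
    rw [List.getD_append_right _ _ _ _ (by omega)]
    simp
  have htail : ∀ i, b.length + 1 < i → (b ++ [x, y]).getD i 0 = 0 := fun i hi =>
    hzero _ i hi
  have hmerge := ncard_twoRowTableaux_last_ne (m := m) (k := b.length)
    (f := fun i => (b ++ [x, y]).getD i 0) (f' := fun i => (b ++ [x + y]).getD i 0)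
    htail (by rw [hfst]; omega) (by rw [hsnd]; omega) (fun i hi => hlt _ _ i hi)
    (by simp only [hfst, hsnd]) (fun i hi => hzero _ i hi)
  have hremove := ncard_twoRowTableaux_last_eq (m := m) (k := b.length)
    (f := fun i => (b ++ [x, y]).getD i 0) (f' := fun i => (b ++ [x - 1, y - 1]).getD i 0)
    htail (fun i h1 h2 => by
      rcases lt_or_ge i b.length with hi | hi
      · exact hlt _ _ i hi
      · rw [htail i (by omega),
          hzero _ i (by simp only [List.length_cons, List.length_nil]; omega)])
    (by simp only [hfst]) (by simp only [hsnd])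
  change Kostka (m + 1) _ = Kostka (m + 1) _ + Kostka m _
  simp only [kostka_eq_ncard_twoRowTableaux]
  rw [← hmerge, ← hremove,
    ← Set.ncard_union_eq ?_ ((finite_twoRowTableaux _ _).subset (Set.sep_subset _ _))
      ((finite_twoRowTableaux _ _).subset (Set.sep_subset _ _))]
  · congr 1
    ext T
    simp only [Set.mem_union, Set.mem_sep_iff]
    tauto
  · exact Set.disjoint_left.mpr fun T h h' => h.2 h'.2
end

section
/- Let n ≥ 4 and let a = (a₁,…,a_r) be a reduced special Schubert problem for Gr(2,n), i.e., 1 ≤ a_i ≤ n−3 for all i, a_i + a_j ≤ n−2 for all i < j, and a₁ + ⋯ + a_r = 2(n−2). If a is not the sequence (1,1,1,1), then there is a permutation (b₁,…,b_r) of (a₁,…,a_r) such that K_{n−2}(b₁,…,b_{r−2}, b_{r−1}+b_r) ≠ K_{n−3}(b₁,…,b_{r−2}, b_{r−1}−1, b_r−1); and when a = (1,1,1,1) both of these numbers equal 1. [Lemma of Brooks–Martín del Campo–Sottile used to prove that all Schubert problems in Gr(2,n) have at least alternating Galois groups.] -/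
/-- The multiplicity of the weight `d` in the `SL₂`-representation `⨂ V_x`, `x ∈ l`, where `V_x`
is the irreducible representation of dimension `x + 1`. -/
def weightMult : List ℕ → ℤ → ℤ
  | [], d => if d = 0 then 1 else 0
  | x :: l, d => ∑ v ∈ Finset.range (x + 1), weightMult l (d + x - 2 * v)

/-- The multiplicity of `V_d` in `⨂ V_x`, `x ∈ l`, extended to all integers `d` by the
antisymmetry `d ↦ -d - 2`. -/
def irredMult (l : List ℕ) (d : ℤ) : ℤ := weightMult l d - weightMult l (d + 2)

theorem weightMult_neg (l : List ℕ) (d : ℤ) : weightMult l (-d) = weightMult l d := by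
  induction l generalizing d with
  | nil => simp [weightMult]
  | cons x l ih =>
    simp only [weightMult]
    rw [← Finset.sum_range_reflect]
    refine Finset.sum_congr rfl fun v hv => ?_
    rw [Finset.mem_range] at hv
    rw [← ih]
    congr 1
    have : ((x + 1 - 1 - v : ℕ) : ℤ) = x - v := by omega
    rw [this]
    ring

theorem weightMult_perm {l l' : List ℕ} (h : l.Perm l') (d : ℤ) :
    weightMult l d = weightMult l' d := by
  induction h generalizing d with
  | nil => rfl
  | cons x _ ih => simp only [weightMult, ih]
  | swap x y l =>
    simp only [weightMult]
    rw [Finset.sum_comm]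
    refine Finset.sum_congr rfl fun v _ => Finset.sum_congr rfl fun w _ => ?_
    congr 1
    ring
  | trans _ _ ih₁ ih₂ => rw [ih₁, ih₂]

theorem irredMult_perm {l l' : List ℕ} (h : l.Perm l') (d : ℤ) :
    irredMult l d = irredMult l' d := by
  simp only [irredMult, weightMult_perm h]

theorem irredMult_antisymm (l : List ℕ) (d : ℤ) : irredMult l (-d - 2) = -irredMult l d := by
  have h₁ := weightMult_neg l d
  have h₂ := weightMult_neg l (d + 2)
  rw [neg_add'] at h₂
  simp only [irredMult, h₂, sub_add_cancel, h₁]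
  ring

theorem irredMult_cons_eq_sum_range (x : ℕ) (l : List ℕ) (d : ℤ) :
    irredMult (x :: l) d = ∑ v ∈ Finset.range (x + 1), irredMult l (d + x - 2 * v) := by
  simp only [irredMult, weightMult, ← Finset.sum_sub_distrib]
  refine Finset.sum_congr rfl fun v _ => ?_
  congr 2
  ring

/-- The Clebsch–Gordan rule. -/
theorem irredMult_cons (x : ℕ) (l : List ℕ) (d : ℕ) :
    irredMult (x :: l) d = ∑ v ∈ Finset.range (min x d + 1), irredMult l (d + x - 2 * v) := by
  rw [irredMult_cons_eq_sum_range]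
  rcases le_total x d with h | h
  · rw [min_eq_left h]
  rw [min_eq_right h, ← Finset.sum_range_add_sum_Ico _ (Nat.succ_le_succ h), add_eq_left]
  set f : ℕ → ℤ := fun v => irredMult l (d + x - 2 * v) with hf
  have hrefl : ∑ v ∈ Finset.Ico (d + 1) (x + 1), f v =
      ∑ v ∈ Finset.Ico (d + 1) (x + 1), -f v := by
    refine Finset.sum_nbij' (fun v => d + 1 + x - v) (fun v => d + 1 + x - v) ?_ ?_ ?_ ?_ ?_
    any_goals intro v hv; simp only [Finset.mem_Ico] at *; omega
    intro v hv
    simp only [Finset.mem_Ico] at hv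
    simp only [hf]
    rw [← irredMult_antisymm]
    congr 1
    omega
  rw [Finset.sum_neg_distrib] at hrefl
  change ∑ v ∈ Finset.Ico (d + 1) (x + 1), f v = 0
  linarith

theorem irredMult_cons_zero (x : ℕ) (l : List ℕ) : irredMult (x :: l) 0 = irredMult l x := by
  simpa using irredMult_cons x l 0

theorem irredMult_nonneg (l : List ℕ) (d : ℕ) : 0 ≤ irredMult l d := by
  induction l generalizing d with
  | nil =>
    have : (d : ℤ) + 2 ≠ 0 := by omega
    simp only [irredMult, weightMult, this, if_false]
    split_ifs <;> norm_num
  | cons x l ih =>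
    rw [irredMult_cons]
    refine Finset.sum_nonneg fun v hv => ?_
    rw [Finset.mem_range] at hv
    have : (d : ℤ) + x - 2 * v = (d + x - 2 * v : ℕ) := by omega
    rw [this]
    exact ih _

theorem irredMult_pos (l : List ℕ) (d : ℕ) (hle : d ≤ l.sum) (hpar : Even (l.sum + d))
    (hmax : ∀ z ∈ l, 2 * z ≤ l.sum + d) : 0 < irredMult l d := by
  induction l generalizing d with
  | nil =>
    obtain rfl : d = 0 := by simpa using hle
    simp [irredMult, weightMult]
  | cons x l ih =>
    simp only [List.sum_cons, List.mem_cons, forall_eq_or_imp] at hle hpar hmax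
    obtain ⟨hx, hmax⟩ := hmax
    obtain ⟨e, he⟩ := hpar
    rw [irredMult_cons]
    set i := min (x + d) l.sum with hi
    have hpar' : Even (l.sum + i) := by
      rcases le_total (x + d) l.sum with h | h
      · rw [hi, min_eq_left h]; exact ⟨e, by omega⟩
      · rw [hi, min_eq_right h]; exact ⟨_, rfl⟩
    have hpos : 0 < irredMult l i := by
      refine ih i (min_le_right _ _) hpar' fun z hz => ?_
      have h₁ := hmax z hz
      have h₂ := List.le_sum_of_mem hz
      omega
    obtain ⟨f, hf⟩ := hpar'
    refine hpos.trans_le ?_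
    have hv : (i : ℤ) = d + x - 2 * ((d + x - i) / 2 : ℕ) := by omega
    rw [hv]
    refine Finset.single_le_sum (f := fun v : ℕ => irredMult l (d + x - 2 * v))
      (fun v hv => ?_) (Finset.mem_range.2 (by omega))
    rw [Finset.mem_range] at hv
    have : (d : ℤ) + x - 2 * v = (d + x - 2 * v : ℕ) := by omega
    simp only [this]
    exact irredMult_nonneg _ _

theorem irredMult_cons_cons_zero (x y : ℕ) (hx : 1 ≤ x) (hy : 1 ≤ y) (l : List ℕ) :
    irredMult (x :: y :: l) 0 =
      irredMult ((x + y) :: l) 0 + irredMult ((x - 1) :: (y - 1) :: l) 0 := by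
  rw [irredMult_cons_zero, irredMult_cons_zero, irredMult_cons_zero, irredMult_cons,
    irredMult_cons, Finset.sum_range_succ']
  rw [add_comm]
  refine congrArg₂ (· + ·) (by simp) ?_
  have : min y x = min (y - 1) (x - 1) + 1 := by omega
  rw [this]
  refine Finset.sum_congr rfl fun v _ => ?_
  congr 1
  omega

/-- Combining different pairs of entries of a list with unequal entries `x < y` changes the
multiplicity. -/
theorem irredMult_add_cons_lt (x y z m : ℕ) (c : List ℕ) (hxy : x < y) (hz : 1 ≤ z)
    (hyz : y + z ≤ m) (hc : ∀ w ∈ c, w + y ≤ m) (hsum : x + y + z + c.sum = 2 * m) :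
    irredMult (x :: c) (y + z : ℕ) < irredMult (y :: c) (x + z : ℕ) := by
  have hpos : 0 < irredMult c (y + z - x - 2 : ℕ) := by
    refine irredMult_pos c _ (by omega) ⟨m - x - 1, by omega⟩ fun w hw => ?_
    have := hc w hw
    omega
  rw [irredMult_cons, irredMult_cons]
  set F : ℕ → ℤ := fun v => irredMult c ((x + y + z : ℕ) - 2 * v) with hF
  have h₁ : ∀ v : ℕ, irredMult c ((y + z : ℕ) + x - 2 * v) = F v := fun v => by
    simp only [hF]; congr 1; push_cast; ring
  have h₂ : ∀ v : ℕ, irredMult c ((x + z : ℕ) + y - 2 * v) = F v := fun v => by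
    simp only [hF]; congr 1; push_cast; ring
  simp only [h₁, h₂]
  refine Finset.sum_lt_sum_of_subset (i := x + 1) ?_ ?_ ?_ ?_ ?_
  · exact Finset.range_subset_range.2 (by omega)
  · exact Finset.mem_range.2 (by omega)
  · exact fun h => by have := Finset.mem_range.1 h; omega
  · have : ((x + y + z : ℕ) : ℤ) - 2 * (x + 1 : ℕ) = (y + z - x - 2 : ℕ) := by omega
    simp only [hF, this, hpos]
  · intro v hv _
    have hv := Finset.mem_range.1 hv
    have : ((x + y + z : ℕ) : ℤ) - 2 * v = (x + y + z - 2 * v : ℕ) := by omega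
    simp only [hF, this]
    exact irredMult_nonneg _ _

theorem exists_irredMult_ne_of_lt (m : ℕ) (a : List ℕ) (hpos : ∀ z ∈ a, 1 ≤ z)
    (hpair : a.Pairwise fun u v => u + v ≤ m) (hsum : a.sum = 2 * m)
    {x y : ℕ} (hx : x ∈ a) (hy : y ∈ a) (hxy : x < y) :
    ∃ (c : List ℕ) (u v : ℕ), (u :: v :: c).Perm a ∧
      irredMult ((u + v) :: c) 0 ≠ irredMult ((u - 1) :: (v - 1) :: c) 0 := by
  by_contra! hcon
  obtain ⟨l, hl⟩ : ∃ l, (x :: y :: l).Perm a := by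
    refine ⟨(a.erase x).erase y, ?_⟩
    have hy' : y ∈ a.erase x := (List.mem_erase_of_ne hxy.ne').2 hy
    exact ((List.perm_cons_erase hy').symm.cons x).trans (List.perm_cons_erase hx).symm
  have hpair' : (x :: y :: l).Pairwise fun u v => u + v ≤ m :=
    hl.symm.pairwise hpair fun h => by rwa [add_comm]
  have hsum' : (x :: y :: l).sum = 2 * m := hl.sum_eq.trans hsum
  have hpos' : ∀ z ∈ x :: y :: l, 1 ≤ z := fun z hz => hpos z (hl.mem_iff.1 hz)
  cases l with
  | nil => simp at hsum' hpair'; omega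
  | cons z c =>
    simp only [List.pairwise_cons, List.mem_cons, forall_eq_or_imp, List.sum_cons] at *
    have key : ∀ u v w : ℕ, (u :: v :: w :: c).Perm (x :: y :: z :: c) →
        irredMult a 0 = 2 * irredMult (w :: c) (u + v : ℕ) := fun u v w h => by
      have hua : (u :: v :: w :: c).Perm a := h.trans hl
      rw [← irredMult_perm hua, irredMult_cons_cons_zero, ← hcon _ _ _ hua,
        irredMult_cons_zero]
      · ring
      · exact hpos u (hua.mem_iff.1 (by simp))
      · exact hpos v (hua.mem_iff.1 (by simp))
    have h₁ := key x z y (.cons _ (.swap _ _ _))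
    have h₂ := key y z x ((List.Perm.cons _ (.swap _ _ _)).trans (.swap _ _ _))
    have := irredMult_add_cons_lt x y z m c hxy hpos'.2.2.1 hpair'.2.1.1
      (fun w hw => by have := hpair'.2.1.2 w hw; omega) (by omega)
    omega

/-- The multiplicity of `V_{2t}` in `V_{2s} ⊗ V_k ⊗ V_k`. -/
def tripleMult (k s t : ℕ) : ℕ := min k (s + t) + 1 - (max s t - min s t)

theorem tripleMult_eq_sum (k s t : ℕ) :
    tripleMult k s t = ∑ i ∈ Finset.range (k + 1),
      if t ∈ Finset.Icc (max s i - min s i) (s + i) then 1 else 0 := by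
  rw [← Finset.sum_filter, Finset.sum_const, smul_eq_mul, mul_one]
  have : (Finset.range (k + 1)).filter
      (fun i => t ∈ Finset.Icc (max s i - min s i) (s + i)) =
      Finset.Ico (max s t - min s t) (min k (s + t) + 1) := by
    ext i
    simp only [Finset.mem_filter, Finset.mem_range, Finset.mem_Icc, Finset.mem_Ico]
    omega
  rw [this, Nat.card_Ico, tripleMult]

theorem sum_tripleMult_mul (k s B : ℕ) (hB : s + k < B) (F : ℕ → ℤ) :
    ∑ t ∈ Finset.range B, (tripleMult k s t : ℤ) * F t =
      ∑ i ∈ Finset.range (k + 1), ∑ t ∈ Finset.Icc (max s i - min s i) (s + i), F t := by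
  simp only [tripleMult_eq_sum, Nat.cast_sum, Finset.sum_mul]
  rw [Finset.sum_comm]
  refine Finset.sum_congr rfl fun i hi => ?_
  rw [Finset.mem_range] at hi
  simp only [Nat.cast_ite, Nat.cast_one, Nat.cast_zero, ite_mul, one_mul, zero_mul]
  rw [← Finset.sum_filter]
  refine Finset.sum_congr ?_ fun _ _ => rfl
  ext t
  simp only [Finset.mem_filter, Finset.mem_range, Finset.mem_Icc]
  omega

theorem irredMult_cons_cons_self (k s : ℕ) (l : List ℕ) (B : ℕ) (hB : s + k < B) :
    irredMult (k :: k :: l) (2 * s : ℕ) =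
      ∑ t ∈ Finset.range B, (tripleMult k s t : ℤ) * irredMult l (2 * t : ℕ) := by
  rw [sum_tripleMult_mul k s B hB fun t => irredMult l (2 * t : ℕ), ← irredMult_cons_zero]
  have hperm : (2 * s :: k :: k :: l).Perm (k :: k :: 2 * s :: l) :=
    (List.Perm.swap _ _ _).trans (.cons _ (.swap _ _ _))
  rw [irredMult_perm hperm, irredMult_cons_zero, irredMult_cons, min_self,
    ← Finset.sum_range_reflect]
  refine Finset.sum_congr rfl fun i hi => ?_
  rw [Finset.mem_range] at hi
  have : (k : ℤ) + k - 2 * (k + 1 - 1 - i : ℕ) = (2 * i : ℕ) := by omega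
  rw [this, irredMult_cons]
  refine Finset.sum_nbij' (fun v => s + i - v) (fun t => s + i - t) ?_ ?_ ?_ ?_ ?_
  any_goals
    intro v hv
    simp only [Finset.mem_Icc, Finset.mem_range] at *
    omega
  intro v hv
  simp only [Finset.mem_range] at hv
  congr 1
  omega

theorem sum_Icc_odd (a b : ℕ) (h : a ≤ b + 1) :
    ∑ t ∈ Finset.Icc a b, (2 * (t : ℤ) + 1) = (b + 1) ^ 2 - a ^ 2 := by
  induction b with
  | zero =>
    obtain rfl | rfl : a = 0 ∨ a = 1 := by omega
    all_goals simp
  | succ b ih =>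
    rcases Nat.lt_or_ge (b + 1) a with hab | hab
    · obtain rfl : a = b + 2 := by omega
      simp
      ring
    · rw [Finset.sum_Icc_succ_top hab, ih hab]
      push_cast
      ring

theorem sum_range_odd (k : ℕ) : ∑ t ∈ Finset.range k, (2 * (t : ℤ) + 1) = k ^ 2 := by
  induction k with
  | zero => simp
  | succ k ih => rw [Finset.sum_range_succ, ih]; push_cast; ring

/-- Comparison of dimensions in `V_{2s} ⊗ V_k ⊗ V_k = ⨁ tripleMult k s t • V_{2t}`. -/
theorem sum_tripleMult_mul_odd (k s B : ℕ) (hB : s + k < B) :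
    ∑ t ∈ Finset.range B, (tripleMult k s t : ℤ) * (2 * t + 1) =
      (2 * s + 1) * (k + 1) ^ 2 := by
  rw [sum_tripleMult_mul k s B hB fun t => 2 * (t : ℤ) + 1]
  have hk := sum_range_odd (k + 1)
  push_cast at hk
  rw [← hk, Finset.mul_sum]
  refine Finset.sum_congr rfl fun i _ => ?_
  rw [sum_Icc_odd _ _ (by omega)]
  have : ((max s i - min s i : ℕ) : ℤ) ^ 2 = (s - i) ^ 2 := by
    rcases le_total s i with h | h
    · rw [max_eq_right h, min_eq_left h]; push_cast [h]; ring
    · rw [max_eq_left h, min_eq_right h]; push_cast [h]; ring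
  rw [this]
  push_cast
  ring

theorem tripleMult_succ_le (k s t : ℕ) (h : t ≤ max k s) :
    (2 * s + 1 : ℤ) * tripleMult k (s + 1) t ≤ (2 * s + 3) * tripleMult k s t := by
  unfold tripleMult
  rcases le_or_gt t s with hts | hts
  · have hle : min k (s + 1 + t) + 1 - (max (s + 1) t - min (s + 1) t) ≤
        min k (s + t) + 1 - (max s t - min s t) := by omega
    have hle' : ((min k (s + 1 + t) + 1 - (max (s + 1) t - min (s + 1) t) : ℕ) : ℤ) ≤
        (min k (s + t) + 1 - (max s t - min s t) : ℕ) := by exact_mod_cast hle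
    nlinarith
  · rcases le_or_gt (s + t + 1) k with h₁ | h₁
    · have e₁ : min k (s + 1 + t) + 1 - (max (s + 1) t - min (s + 1) t) = 2 * s + 3 := by omega
      have e₂ : min k (s + t) + 1 - (max s t - min s t) = 2 * s + 1 := by omega
      rw [e₁, e₂]
      push_cast
      linarith
    · have e₁ : ((min k (s + 1 + t) + 1 - (max (s + 1) t - min (s + 1) t) : ℕ) : ℤ) =
          k + s + 2 - t := by omega
      have e₂ : ((min k (s + t) + 1 - (max s t - min s t) : ℕ) : ℤ) = k + s + 1 - t := by omega
      rw [e₁, e₂]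
      have : (t : ℤ) ≤ k := by omega
      linarith

theorem le_tripleMult_succ (k s t : ℕ) (h : max k s < t) :
    (2 * s + 3 : ℤ) * tripleMult k s t ≤ (2 * s + 1) * tripleMult k (s + 1) t := by
  unfold tripleMult
  rcases le_or_gt t (s + k + 1) with h₁ | h₁
  · have e₁ : ((min k (s + 1 + t) + 1 - (max (s + 1) t - min (s + 1) t) : ℕ) : ℤ) =
        k + s + 2 - t := by omega
    have e₂ : ((min k (s + t) + 1 - (max s t - min s t) : ℕ) : ℤ) = k + s + 1 - t := by omega
    rw [e₁, e₂]
    have : (k : ℤ) + 1 ≤ t := by omega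
    linarith
  · have e₂ : min k (s + t) + 1 - (max s t - min s t) = 0 := by omega
    rw [e₂]
    simp only [Nat.cast_zero, mul_zero]
    positivity

/-- `F t / (2 t + 1)` is weakly decreasing. -/
def DimDecreasing (F : ℕ → ℤ) : Prop := ∀ s : ℕ, (2 * s + 1) * F (s + 1) ≤ (2 * s + 3) * F s

theorem DimDecreasing.mul_le {F : ℕ → ℤ} (hF : DimDecreasing F) {s t : ℕ} (h : s ≤ t) :
    (2 * s + 1) * F t ≤ (2 * t + 1) * F s := by
  induction t, h using Nat.le_induction with
  | base => rfl
  | succ t h ih =>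
    have := hF t
    push_cast
    have ht : (0 : ℤ) < 2 * t + 1 := by positivity
    refine le_of_mul_le_mul_left ?_ ht
    have hs : (0 : ℤ) ≤ 2 * s + 1 := by positivity
    nlinarith [mul_le_mul_of_nonneg_left this hs,
      mul_le_mul_of_nonneg_left ih (by positivity : (0 : ℤ) ≤ 2 * t + 3)]

theorem dimDecreasing_cons_cons_of_support (k : ℕ) (l : List ℕ)
    (hl : ∀ t : ℕ, k < t → irredMult l (2 * t : ℕ) = 0) :
    DimDecreasing fun t => irredMult (k :: k :: l) (2 * t : ℕ) := by
  intro s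
  simp only [irredMult_cons_cons_self k s l (s + k + 2) (by omega),
    irredMult_cons_cons_self k (s + 1) l (s + k + 2) (by omega), Finset.mul_sum, ← mul_assoc]
  refine Finset.sum_le_sum fun t _ => ?_
  rcases le_or_gt t k with h | h
  · exact mul_le_mul_of_nonneg_right (tripleMult_succ_le k s t (le_max_of_le_left h))
      (irredMult_nonneg _ _)
  · simp only [hl t h, mul_zero, le_refl]

theorem DimDecreasing.cons_cons (k : ℕ) (l : List ℕ)
    (hl : DimDecreasing fun t => irredMult l (2 * t : ℕ)) :
    DimDecreasing fun t => irredMult (k :: k :: l) (2 * t : ℕ) := by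
  intro s
  set F : ℕ → ℤ := fun t => irredMult l (2 * t : ℕ) with hF
  set e := max k s with he
  have hpos : (0 : ℤ) < 2 * e + 1 := by positivity
  simp only [irredMult_cons_cons_self k s l (s + k + 2) (by omega),
    irredMult_cons_cons_self k (s + 1) l (s + k + 2) (by omega)]
  have h₀ := sum_tripleMult_mul_odd k s (s + k + 2) (by omega)
  have h₁ := sum_tripleMult_mul_odd k (s + 1) (s + k + 2) (by omega)
  have hterm : 0 ≤ ∑ t ∈ Finset.range (s + k + 2),
      ((2 * s + 3 : ℤ) * tripleMult k s t - (2 * s + 1) * tripleMult k (s + 1) t) *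
        ((2 * e + 1) * F t - (2 * t + 1) * F e) := by
    refine Finset.sum_nonneg fun t _ => ?_
    rcases le_or_gt t e with h | h
    · exact mul_nonneg (sub_nonneg.2 (tripleMult_succ_le k s t h)) (sub_nonneg.2 (hl.mul_le h))
    · exact mul_nonneg_of_nonpos_of_nonpos (sub_nonpos.2 (le_tripleMult_succ k s t h))
        (sub_nonpos.2 (hl.mul_le h.le))
  have hexp : ∑ t ∈ Finset.range (s + k + 2),
      ((2 * s + 3 : ℤ) * tripleMult k s t - (2 * s + 1) * tripleMult k (s + 1) t) *
        ((2 * e + 1) * F t - (2 * t + 1) * F e) =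
      (2 * e + 1) * ((2 * s + 3) * ∑ t ∈ Finset.range (s + k + 2), (tripleMult k s t : ℤ) * F t -
        (2 * s + 1) * ∑ t ∈ Finset.range (s + k + 2), (tripleMult k (s + 1) t : ℤ) * F t) -
      F e * ((2 * s + 3) *
          ∑ t ∈ Finset.range (s + k + 2), (tripleMult k s t : ℤ) * (2 * t + 1) -
        (2 * s + 1) *
          ∑ t ∈ Finset.range (s + k + 2), (tripleMult k (s + 1) t : ℤ) * (2 * t + 1)) := by
    simp only [Finset.mul_sum, ← Finset.sum_sub_distrib]
    refine Finset.sum_congr rfl fun t _ => ?_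
    ring
  rw [hexp, h₀, h₁] at hterm
  have hzero : (2 * s + 3 : ℤ) * ((2 * s + 1) * (k + 1) ^ 2) -
      (2 * s + 1) * ((2 * (s + 1 : ℕ) + 1) * (k + 1) ^ 2) = 0 := by
    push_cast
    ring
  rw [hzero, mul_zero, sub_zero] at hterm
  exact sub_nonneg.1 (nonneg_of_mul_nonneg_right hterm hpos)

theorem dimDecreasing_replicate (k p : ℕ) :
    DimDecreasing fun t => irredMult (List.replicate (p + 2) k) (2 * t : ℕ) := by
  induction p using Nat.twoStepInduction with
  | zero =>
    refine dimDecreasing_cons_cons_of_support k [] fun t ht => ?_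
    have h₁ : ((2 * t : ℕ) : ℤ) ≠ 0 := by omega
    have h₂ : ((2 * t : ℕ) : ℤ) + 2 ≠ 0 := by omega
    simp only [irredMult, weightMult, h₁, h₂, if_false, sub_zero]
  | one =>
    refine dimDecreasing_cons_cons_of_support k [k] fun t ht => ?_
    rw [irredMult_cons]
    refine Finset.sum_eq_zero fun v hv => ?_
    rw [Finset.mem_range] at hv
    have h₁ : ((2 * t : ℕ) : ℤ) + k - 2 * v ≠ 0 := by omega
    have h₂ : ((2 * t : ℕ) : ℤ) + k - 2 * v + 2 ≠ 0 := by omega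
    simp only [irredMult, weightMult, h₁, h₂, if_false, sub_zero]
  | more p ih _ => exact ih.cons_cons k _

theorem irredMult_pred_cons_pred_zero (k : ℕ) (hk : 1 ≤ k) (l : List ℕ) :
    irredMult ((k - 1) :: (k - 1) :: l) 0 =
      ∑ s ∈ Finset.range k, irredMult l (2 * s : ℕ) := by
  rw [irredMult_cons_zero, irredMult_cons, min_self, Nat.sub_add_cancel hk,
    ← Finset.sum_range_reflect]
  refine Finset.sum_congr rfl fun s hs => ?_
  rw [Finset.mem_range] at hs
  congr 1
  omega

theorem irredMult_replicate_lt_sum (k p : ℕ) (hk : 3 ≤ k) (heven : Even (p * k)) :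
    irredMult (List.replicate (p + 2) k) (2 * k : ℕ) <
      ∑ s ∈ Finset.range k, irredMult (List.replicate (p + 2) k) (2 * s : ℕ) := by
  have hdec := dimDecreasing_replicate k p
  set F : ℕ → ℤ := fun t => irredMult (List.replicate (p + 2) k) (2 * t : ℕ) with hF
  have hpos : 0 < F k := by
    obtain ⟨e, he⟩ := heven
    refine irredMult_pos _ _ ?_ ?_ fun z hz => ?_
    · rw [List.sum_replicate, smul_eq_mul]; nlinarith
    · rw [List.sum_replicate, smul_eq_mul]; exact ⟨e + 2 * k, by linarith⟩
    · rw [List.eq_of_mem_replicate hz]; omega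
  have hsum : (k : ℤ) ^ 2 * F k ≤ (2 * k + 1) * ∑ s ∈ Finset.range k, F s := by
    rw [← sum_range_odd, Finset.sum_mul, Finset.mul_sum]
    exact Finset.sum_le_sum fun s hs => hdec.mul_le (Finset.mem_range.1 hs).le
  change F k < ∑ s ∈ Finset.range k, F s
  have hk' : (3 : ℤ) ≤ k := by exact_mod_cast hk
  have : (2 * k + 1 : ℤ) < k ^ 2 := by nlinarith
  have hlt := mul_lt_mul_of_pos_right this hpos
  exact lt_of_mul_lt_mul_left (hlt.trans_le hsum) (by positivity)

theorem irredMult_replicate_one_lt (q : ℕ) (hq : 2 ≤ q) (heven : Even q) :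
    irredMult (List.replicate (q + 2) 1) 0 < irredMult (List.replicate (q + 2) 1) 2 := by
  have h₀ := irredMult_cons_cons_self 1 0 (List.replicate q 1) 3 (by norm_num)
  have h₁ := irredMult_cons_cons_self 1 1 (List.replicate q 1) 3 (by norm_num)
  have hpos : 0 < irredMult (List.replicate q 1) (2 : ℕ) := by
    refine irredMult_pos _ _ (by simpa using hq) ?_ fun z hz => ?_
    · simpa using heven.add even_two
    · rw [List.eq_of_mem_replicate hz]; omega
  have hnonneg := irredMult_nonneg (List.replicate q 1) (4 : ℕ)
  simp [Finset.sum_range_succ, tripleMult] at h₀ h₁ hpos hnonneg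
  simp only [List.replicate_succ, h₀, h₁]
  linarith

/-- The trinomial coefficient: the coefficient of `x ^ j` in `(x⁻¹ + 1 + x) ^ p`. -/
def trinomial (p : ℕ) (j : ℤ) : ℤ := weightMult (List.replicate p 2) (2 * j)

theorem trinomial_succ (p : ℕ) (j : ℤ) :
    trinomial (p + 1) j = trinomial p (j - 1) + trinomial p j + trinomial p (j + 1) := by
  simp only [trinomial, List.replicate_succ, weightMult, Finset.sum_range_succ,
    Finset.sum_range_zero]
  push_cast
  ring_nf

theorem trinomial_neg (p : ℕ) (j : ℤ) : trinomial p (-j) = trinomial p j := by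
  rw [trinomial, mul_neg, weightMult_neg, trinomial]

/-- The differential equation satisfied by `(x⁻¹ + 1 + x) ^ p`. -/
theorem mul_trinomial_succ (p : ℕ) (j : ℤ) :
    j * trinomial (p + 1) j = (p + 1) * (trinomial p (j - 1) - trinomial p (j + 1)) := by
  induction p generalizing j with
  | zero =>
    rw [trinomial_succ]
    simp only [trinomial, List.replicate_zero, weightMult]
    split_ifs <;> omega
  | succ p ih =>
    have h₁ := ih (j - 1)
    have h₂ := ih j
    have h₃ := ih (j + 1)
    clear ih
    simp only [trinomial_succ, sub_add_cancel, add_sub_cancel_right,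
      show j - 1 - 1 = j - 2 by ring, show j + 1 + 1 = j + 2 by ring] at *
    push_cast
    linarith

theorem trinomial_two (p : ℕ) :
    (p + 2) * trinomial p 2 = p * trinomial p 0 - trinomial p 1 := by
  have h₁ := mul_trinomial_succ p 1
  rw [trinomial_succ] at h₁
  norm_num at h₁
  linarith

theorem trinomial_three (p : ℕ) :
    (p + 3) * trinomial p 3 = (p - 1) * trinomial p 1 - 2 * trinomial p 2 := by
  have h₁ := mul_trinomial_succ p 2
  rw [trinomial_succ] at h₁
  norm_num at h₁
  linarith

theorem trinomial_succ_zero (p : ℕ) :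
    trinomial (p + 1) 0 = trinomial p 0 + 2 * trinomial p 1 := by
  rw [trinomial_succ, zero_sub, trinomial_neg, zero_add]
  ring

theorem trinomial_succ_one (p : ℕ) :
    (p + 2) * trinomial (p + 1) 1 = (2 * p + 2) * trinomial p 0 + (p + 1) * trinomial p 1 := by
  have := trinomial_two p
  rw [trinomial_succ]
  norm_num
  linarith

theorem trinomial_zero_one_pos (p : ℕ) : 0 < trinomial p 0 ∧ 0 ≤ trinomial p 1 := by
  induction p with
  | zero => simp [trinomial, weightMult]
  | succ p ih =>
    have h := trinomial_succ_one p
    refine ⟨by rw [trinomial_succ_zero]; linarith, ?_⟩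
    have : 0 ≤ ((p : ℤ) + 2) * trinomial (p + 1) 1 := by
      rw [h]
      have := ih.1
      have := ih.2
      positivity
    exact nonneg_of_mul_nonneg_right this (by positivity)

theorem trinomial_one_bounds (p : ℕ) (hp : 2 ≤ p) :
    (2 * p + 2) * trinomial p 0 ≤ (2 * p + 5) * trinomial p 1 ∧
      (2 * p + 1) * trinomial p 1 ≤ 2 * p * trinomial p 0 := by
  induction p, hp using Nat.le_induction with
  | base =>
    have h₀ : trinomial 2 0 = 3 := by decide
    have h₁ : trinomial 2 1 = 2 := by decide
    rw [h₀, h₁]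
    norm_num
  | succ p hp ih =>
    obtain ⟨ih₁, ih₂⟩ := ih
    obtain ⟨h₀, -⟩ := trinomial_zero_one_pos p
    have e₁ := trinomial_succ_one p
    rw [trinomial_succ_zero]
    set a := trinomial p 0
    set b := trinomial p 1
    set c := trinomial (p + 1) 1
    have hp2 : (0 : ℤ) < p + 2 := by positivity
    have hp' : (2 : ℤ) ≤ p := by exact_mod_cast hp
    push_cast
    constructor
    · refine le_of_mul_le_mul_left ?_ hp2
      have : (p + 2 : ℤ) * ((2 * (p + 1) + 5) * c) =
          (2 * p + 7) * ((2 * p + 2) * a + (p + 1) * b) := by rw [← e₁]; ring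
      rw [this]
      nlinarith
    · refine le_of_mul_le_mul_left ?_ hp2
      have : (p + 2 : ℤ) * ((2 * (p + 1) + 1) * c) =
          (2 * p + 3) * ((2 * p + 2) * a + (p + 1) * b) := by rw [← e₁]; ring
      rw [this]
      nlinarith

/-- The pair `(trinomial p 0, trinomial p 1)`, computed by its recurrence in `p`. -/
def trinomialPair : ℕ → ℤ × ℤ
  | 0 => (1, 0)
  | p + 1 =>
    let t := trinomialPair p
    (t.1 + 2 * t.2, ((2 * p + 2) * t.1 + (p + 1) * t.2) / (p + 2))

theorem trinomialPair_eq (p : ℕ) : trinomialPair p = (trinomial p 0, trinomial p 1) := by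
  induction p with
  | zero => simp [trinomialPair, trinomial, weightMult]
  | succ p ih =>
    have hp : (p : ℤ) + 2 ≠ 0 := by positivity
    simp only [trinomialPair, ih, ← trinomial_succ_zero, ← trinomial_succ_one,
      Int.mul_ediv_cancel_left _ hp]

theorem trinomialPair_ne : ∀ p : ℕ, p < 22 → ((p : ℤ) ^ 2 + 3 * p - 6) * (trinomialPair p).1 ≠
    (p ^ 2 + 3 * p + 6) * (trinomialPair p).2 := by
  decide +kernel

theorem irredMult_replicate_two_ne (p : ℕ) :
    irredMult (List.replicate p 2) 4 ≠
      irredMult (List.replicate p 2) 0 + irredMult (List.replicate p 2) 2 := by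
  intro h
  have hD : 2 * trinomial p 2 = trinomial p 3 + trinomial p 0 := by
    simp only [irredMult] at h
    norm_num at h
    simp only [trinomial]
    norm_num
    linarith
  have h₂ := trinomial_two p
  have h₃ := trinomial_three p
  have key : ((p : ℤ) ^ 2 + 3 * p - 6) * trinomial p 0 = (p ^ 2 + 3 * p + 6) * trinomial p 1 := by
    linear_combination (p + 2 : ℤ) * (p + 3) * hD - (2 * p + 8 : ℤ) * h₂ + (p + 2 : ℤ) * h₃
  rcases Nat.lt_or_ge p 22 with hp | hp
  · exact trinomialPair_ne p hp (by rw [trinomialPair_eq]; exact key)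
  · obtain ⟨-, hb⟩ := trinomial_one_bounds p (by omega)
    obtain ⟨hpos, -⟩ := trinomial_zero_one_pos p
    have hp' : (22 : ℤ) ≤ p := by exact_mod_cast hp
    have h₁ := mul_le_mul_of_nonneg_left hb (by positivity : (0 : ℤ) ≤ p ^ 2 + 3 * p + 6)
    have h₄ : (2 * p + 1 : ℤ) * ((p ^ 2 + 3 * p - 6) * trinomial p 0) =
        (2 * p + 1) * ((p ^ 2 + 3 * p + 6) * trinomial p 1) := by rw [key]
    have h₅ : (0 : ℤ) < p ^ 2 - 21 * p - 6 := by nlinarith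
    nlinarith [mul_pos h₅ hpos]

theorem irredMult_replicate_ne (k p : ℕ) (hk : 1 ≤ k) (hp : 2 ≤ p) (heven : Even (p * k))
    (hne : ¬(k = 1 ∧ p = 2)) :
    irredMult ((k + k) :: List.replicate p k) 0 ≠
      irredMult ((k - 1) :: (k - 1) :: List.replicate p k) 0 := by
  rw [irredMult_pred_cons_pred_zero k hk, irredMult_cons_zero, ← two_mul]
  obtain ⟨q, rfl⟩ := Nat.exists_eq_add_of_le' hp
  have heven' : Even (q * k) := by
    rw [add_mul, Nat.even_add] at heven
    exact heven.2 (even_two_mul k)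
  rcases Nat.lt_or_ge k 3 with h | h
  · obtain rfl | rfl : k = 1 ∨ k = 2 := by omega
    · rw [mul_one] at heven'
      obtain ⟨e, he⟩ := id heven'
      have := irredMult_replicate_one_lt q (by omega) heven'
      simpa using this.ne'
    · have := irredMult_replicate_two_ne (q + 2)
      simpa [Finset.sum_range_succ] using this
  · exact (irredMult_replicate_lt_sum k q h heven').ne

theorem exists_irredMult_ne (m : ℕ) (a : List ℕ) (hpos : ∀ z ∈ a, 1 ≤ z ∧ z < m)
    (hpair : a.Pairwise fun u v => u + v ≤ m) (hsum : a.sum = 2 * m) (hm : 1 ≤ m)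
    (hne : a ≠ [1, 1, 1, 1]) :
    ∃ (c : List ℕ) (u v : ℕ), (u :: v :: c).Perm a ∧
      irredMult ((u + v) :: c) 0 ≠ irredMult ((u - 1) :: (v - 1) :: c) 0 := by
  by_cases hlt : ∃ x ∈ a, ∃ y ∈ a, x < y
  · obtain ⟨x, hx, y, hy, hxy⟩ := hlt
    exact exists_irredMult_ne_of_lt m a (fun z hz => (hpos z hz).1) hpair hsum hx hy hxy
  push Not at hlt
  cases a with
  | nil => simp at hsum; omega
  | cons k l =>
    obtain ⟨r, rfl⟩ : ∃ r, l = List.replicate r k := by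
      refine ⟨l.length, List.eq_replicate_iff.2 ⟨rfl, fun b hb => ?_⟩⟩
      exact le_antisymm (hlt k (by simp) b (by simp [hb])) (hlt b (by simp [hb]) k (by simp))
    have hk := hpos k (by simp)
    simp only [List.sum_cons, List.sum_replicate, smul_eq_mul] at hsum
    match r with
    | 0 => simp at hsum; omega
    | p + 1 =>
      have hkk : k + k ≤ m := (List.pairwise_cons.1 hpair).1 k (by simp)
      have hp : 2 ≤ p := by
        by_contra! h
        interval_cases p <;> omega
      refine ⟨List.replicate p k, k, k, List.Perm.refl _, ?_⟩
      refine irredMult_replicate_ne k p hk.1 hp ⟨m - k, ?_⟩ ?_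
      · have : (p + 1) * k = p * k + k := by ring
        omega
      · rintro ⟨rfl, rfl⟩
        exact hne rfl

/-- The sequences of numbers of entries `1, 2, …` in the second row of a two-row tableau of
content `a`, both of whose rows end in the same column, when the first `d` boxes of the first row
are already filled. -/
def secondRows : List ℕ → ℕ → Finset (List ℕ)
  | [], d => if d = 0 then {[]} else ∅
  | x :: l, d => (Finset.range (min x d + 1)).biUnion fun v =>
      (secondRows l (d + x - 2 * v)).image (List.cons v)

theorem card_secondRows (a : List ℕ) (d : ℕ) : ((secondRows a d).card : ℤ) = irredMult a d := by
  induction a generalizing d with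
  | nil =>
    have : (d : ℤ) + 2 ≠ 0 := by omega
    by_cases hd : d = 0 <;> simp [secondRows, irredMult, weightMult, this, hd]
  | cons x l ih =>
    rw [secondRows, Finset.card_biUnion, Nat.cast_sum, irredMult_cons]
    · refine Finset.sum_congr rfl fun v hv => ?_
      rw [Finset.mem_range] at hv
      rw [Finset.card_image_of_injective _ List.cons_injective, ih]
      congr 1
      omega
    · intro v _ w _ hvw
      simp only [Finset.disjoint_left, Finset.mem_image]
      rintro _ ⟨s, -, rfl⟩ ⟨t, -, h⟩
      exact hvw (List.cons.inj h).1.symm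

theorem mem_secondRows (a w : List ℕ) (d : ℕ) :
    w ∈ secondRows a d ↔ w.length = a.length ∧
      (∀ i < a.length, (w.take (i + 1)).sum + (w.take i).sum ≤ d + (a.take i).sum ∧
        (w.take (i + 1)).sum + (a.take i).sum ≤ (w.take i).sum + (a.take (i + 1)).sum) ∧
      2 * w.sum = d + a.sum := by
  induction a generalizing w d with
  | nil =>
    by_cases hd : d = 0
    · subst hd
      cases w <;> simp [secondRows]
    · cases w <;> simp [secondRows, hd, Ne.symm hd]
  | cons x l ih =>
    cases w with
    | nil => simp [secondRows]
    | cons v w =>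
      have hmem : v :: w ∈ secondRows (x :: l) d ↔
          v ≤ min x d ∧ w ∈ secondRows l (d + x - 2 * v) := by
        simp [secondRows]
      rw [hmem, ih]
      simp only [List.length_cons, Nat.add_right_cancel_iff, List.take_succ_cons, List.sum_cons]
      constructor
      · rintro ⟨hv, hlen, h, hsum⟩
        refine ⟨hlen, fun i hi => ?_, by omega⟩
        cases i with
        | zero => simp; omega
        | succ i =>
          have := h i (by omega)
          simp only [List.take_succ_cons, List.sum_cons]
          omega
      · rintro ⟨hlen, h, hsum⟩
        have h₀ := h 0 (by omega)
        simp at h₀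
        refine ⟨by omega, hlen, fun i hi => ?_, by omega⟩
        have := h (i + 1) (by omega)
        simp only [List.take_succ_cons, List.sum_cons] at this
        omega

section Rows

variable {m r : ℕ}

theorem lt_card_filter_iff {f : Fin m → Fin r} (hf : Monotone f) (i : ℕ) (q : Fin m) :
    q.val < (Finset.univ.filter fun q => (f q).val < i).card ↔ (f q).val < i := by
  constructor
  · intro h
    by_contra! hq
    have hsub : (Finset.univ.filter fun q => (f q).val < i) ⊆ Finset.Iio q := by
      intro q' hq'
      rw [Finset.mem_filter] at hq'
      rw [Finset.mem_Iio]
      by_contra! hle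
      have : (f q).val ≤ (f q').val := hf hle
      omega
    have := Finset.card_le_card hsub
    rw [Fin.card_Iio] at this
    omega
  · intro h
    have hsub : Finset.Iic q ⊆ Finset.univ.filter fun q => (f q).val < i := by
      intro q' hq'
      rw [Finset.mem_Iic] at hq'
      have : (f q').val ≤ (f q).val := hf hq'
      simp only [Finset.mem_filter, Finset.mem_univ, true_and]
      omega
    have := Finset.card_le_card hsub
    rw [Fin.card_Iic] at this
    omega

theorem card_filter_lt_eq (f : Fin m → Fin r) (i : ℕ) :
    (Finset.univ.filter fun q => (f q).val < i).card =
      ((List.ofFn fun j => (Finset.univ.filter fun q => f q = j).card).take i).sum := by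
  rw [List.sum_take_ofFn, Finset.card_eq_sum_card_fiberwise (f := f)
    (t := Finset.univ.filter fun j : Fin r => j.val < i)]
  · refine Finset.sum_congr rfl fun j hj => ?_
    rw [Finset.filter_filter]
    congr 1
    ext q
    simp only [Finset.mem_filter, Finset.mem_univ, true_and] at *
    exact ⟨fun h => h.2, fun h => ⟨h ▸ hj, h⟩⟩
  · intro q hq
    simpa using hq

theorem card_filter_lt_succ (f : Fin m → Fin r) (i : Fin r) :
    (Finset.univ.filter fun q => (f q).val < i.val + 1).card =
      (Finset.univ.filter fun q => (f q).val < i.val).card +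
        (Finset.univ.filter fun q => f q = i).card := by
  rw [← Finset.card_union_of_disjoint]
  · congr 1
    ext q
    simp only [Finset.mem_filter, Finset.mem_univ, true_and, Finset.mem_union, Fin.ext_iff]
    omega
  · rw [Finset.disjoint_left]
    intro q
    simp only [Finset.mem_filter, Finset.mem_univ, true_and, Fin.ext_iff]
    omega

/-- A weakly increasing row with prescribed numbers `P i` of entries below `i`. -/
theorem exists_monotone_row (P : ℕ → ℕ) (hP : Monotone P) (h0 : P 0 = 0) (hr : P r = m) :
    ∃ f : Fin m → Fin r, Monotone f ∧ (∀ q i, (f q).val < i ↔ q.val < P i) ∧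
      ∀ i ≤ r, (Finset.univ.filter fun q => (f q).val < i).card = P i := by
  have hlast : ∀ q : Fin m, r - 1 < r ∧ q.val < P (r - 1 + 1) := fun q => by
    have hr0 : r ≠ 0 := by rintro rfl; have := q.isLt; omega
    rw [Nat.sub_add_cancel (by omega), hr]
    exact ⟨by omega, q.isLt⟩
  have hex : ∀ q : Fin m, ∃ i, q.val < P (i + 1) := fun q => ⟨r - 1, (hlast q).2⟩
  let f : Fin m → Fin r := fun q =>
    ⟨Nat.find (hex q), (Nat.find_min' (hex q) (hlast q).2).trans_lt (hlast q).1⟩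
  have hf : ∀ q i, (f q).val < i ↔ q.val < P i := fun q i => by
    change Nat.find (hex q) < i ↔ _
    rw [Nat.find_lt_iff]
    constructor
    · rintro ⟨j, hj, h⟩
      exact h.trans_le (hP hj)
    · intro h
      cases i with
      | zero => omega
      | succ i => exact ⟨i, by omega, h⟩
  refine ⟨f, fun q q' h => ?_, hf, fun i hi => ?_⟩
  · exact Nat.find_mono fun i hi => lt_of_le_of_lt (Fin.le_def.1 h) hi
  · simp only [hf]
    have := hP hi
    rw [Fin.card_filter_val_lt]
    omega

theorem card_filter_two_rows (T : Fin 2 → Fin m → Fin r) (i : Fin r) :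
    ((Finset.univ : Finset (Fin 2 × Fin m)).filter fun pq => T pq.1 pq.2 = i).card =
      (Finset.univ.filter fun q => T 0 q = i).card +
        (Finset.univ.filter fun q => T 1 q = i).card := by
  simp only [Finset.card_filter, Fintype.sum_prod_type, Fin.sum_univ_two]

end Rows

theorem kostka_eq_irredMult (m : ℕ) (a : List ℕ) (hsum : a.sum = 2 * m) :
    (Kostka m (a.map (↑)) : ℤ) = irredMult a 0 := by
  rw [← Nat.cast_zero, ← card_secondRows, Nat.cast_inj, Kostka, ← Set.ncard_coe_finset]
  set L : List ℤ := a.map (↑) with hL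
  have hlen : L.length = a.length := List.length_map _
  have htotal : ∀ T : Fin 2 → Fin m → Fin L.length,
      (∀ i : Fin L.length, L.get i = (((Finset.univ : Finset (Fin 2 × Fin m)).filter
        fun pq => T pq.1 pq.2 = i).card : ℤ)) → ∀ i,
      (Finset.univ.filter fun q => (T 0 q).val < i).card +
        (Finset.univ.filter fun q => (T 1 q).val < i).card = (a.take i).sum := by
    intro T hT i
    have h : ((a.take i).sum : ℤ) = ((List.ofFn L.get).take i).sum := by
      rw [List.ofFn_get, hL, ← List.map_take, Nat.cast_list_sum]
    rw [List.sum_take_ofFn] at h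
    rw [card_filter_lt_eq, card_filter_lt_eq, List.sum_take_ofFn, List.sum_take_ofFn,
      ← Finset.sum_add_distrib]
    rw [← Nat.cast_inj (R := ℤ), h, Nat.cast_sum]
    refine Finset.sum_congr rfl fun j _ => ?_
    rw [hT, card_filter_two_rows]
  refine Set.ncard_congr
    (fun T _ => List.ofFn fun j => (Finset.univ.filter fun q => T 1 q = j).card) ?_ ?_ ?_
  · rintro T ⟨-, hcol, hT⟩
    have hT := htotal T hT
    rw [Finset.mem_coe, mem_secondRows]
    simp only [← card_filter_lt_eq (T 1)]
    refine ⟨by rw [List.length_ofFn, hlen], fun i _ => ?_, ?_⟩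
    · have hle : (Finset.univ.filter fun q => (T 1 q).val < i + 1).card ≤
          (Finset.univ.filter fun q => (T 0 q).val < i).card := by
        refine Finset.card_le_card fun q hq => ?_
        have : (T 0 q).val < (T 1 q).val := hcol q
        simp only [Finset.mem_filter, Finset.mem_univ, true_and] at *
        omega
      have hle' : (Finset.univ.filter fun q => (T 0 q).val < i).card ≤
          (Finset.univ.filter fun q => (T 0 q).val < i + 1).card := by
        refine Finset.card_le_card fun q hq => ?_
        simp only [Finset.mem_filter, Finset.mem_univ, true_and] at *
        omega
      have h₁ := hT i
      have h₂ := hT (i + 1)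
      omega
    · have h := card_filter_lt_eq (T 1) L.length
      rw [List.take_of_length_le (by simp)] at h
      rw [← h]
      simp [hsum]
  · rintro T T' ⟨hmono, -, hT⟩ ⟨hmono', -, hT'⟩ heq
    have hrow₁ : ∀ i, (Finset.univ.filter fun q => (T 1 q).val < i).card =
        (Finset.univ.filter fun q => (T' 1 q).val < i).card := fun i => by
      rw [card_filter_lt_eq, card_filter_lt_eq]
      exact congrArg (fun l => (l.take i).sum) heq
    have hrow₀ : ∀ i, (Finset.univ.filter fun q => (T 0 q).val < i).card =
        (Finset.univ.filter fun q => (T' 0 q).val < i).card := fun i => by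
      have h₁ := htotal T hT i
      have h₂ := htotal T' hT' i
      have h₃ := hrow₁ i
      omega
    funext p q
    refine Fin.ext (eq_of_forall_gt_iff fun i => ?_)
    rw [← lt_card_filter_iff (hmono p), ← lt_card_filter_iff (hmono' p)]
    fin_cases p
    · exact iff_of_eq (congrArg _ (hrow₀ i))
    · exact iff_of_eq (congrArg _ (hrow₁ i))
  · intro w hw
    rw [Finset.mem_coe, mem_secondRows] at hw
    obtain ⟨hwlen, hstep, hwsum⟩ := hw
    have hinc : ∀ i, (w.take (i + 1)).sum + (a.take i).sum ≤
        (w.take i).sum + (a.take (i + 1)).sum := fun i => by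
      rcases Nat.lt_or_ge i a.length with h | h
      · exact (hstep i h).2
      · rw [List.take_of_length_le (l := w) (by omega), List.take_of_length_le (l := w) (by omega),
          List.take_of_length_le (l := a) (by omega), List.take_of_length_le (l := a) (by omega)]
    have hle : ∀ i, (w.take i).sum ≤ (a.take i).sum := fun i => by
      induction i with
      | zero => simp
      | succ i ih => have := hinc i; omega
    have hmono₁ : Monotone fun i => (w.take i).sum := List.monotone_sum_take w
    have hmono₀ : Monotone fun i => (a.take i).sum - (w.take i).sum :=
      monotone_nat_of_le_succ fun i => by
        have h₁ := hinc i
        have h₂ := hle i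
        have h₃ := hle (i + 1)
        omega
    obtain ⟨f₀, hf₀, hlt₀, hcard₀⟩ := exists_monotone_row (r := L.length) (m := m) _ hmono₀
      (by simp) (by rw [hlen, List.take_length, ← hwlen, List.take_length]; omega)
    obtain ⟨f₁, hf₁, hlt₁, hcard₁⟩ := exists_monotone_row (r := L.length) (m := m) _ hmono₁
      (by simp) (by simp only [hlen, ← hwlen, List.take_length]; omega)
    have hcount₁ : ∀ i : Fin L.length, (Finset.univ.filter fun q => f₁ q = i).card =
        w[i.val]'(by have := i.isLt; omega) := fun i => by
      have h := card_filter_lt_succ f₁ i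
      rw [hcard₁ _ i.isLt, hcard₁ _ i.isLt.le,
        List.sum_take_succ _ _ (by have := i.isLt; omega)] at h
      omega
    refine ⟨![f₀, f₁], ⟨?_, ?_, ?_⟩, ?_⟩
    · intro p
      fin_cases p
      · exact hf₀
      · exact hf₁
    · intro q
      change (f₀ q).val < (f₁ q).val
      rw [hlt₀]
      have h := (hlt₁ q ((f₁ q).val + 1)).1 (Nat.lt_succ_self _)
      have h' := (hstep (f₁ q).val (by have := (f₁ q).isLt; omega)).1
      omega
    · intro i
      rw [card_filter_two_rows]
      change L.get i = (((Finset.univ.filter fun q => f₀ q = i).card +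
        (Finset.univ.filter fun q => f₁ q = i).card : ℕ) : ℤ)
      have h₀ := card_filter_lt_succ f₀ i
      have h₁ := card_filter_lt_succ f₁ i
      have hi := i.isLt
      rw [hcard₀ (i.val + 1) i.isLt, hcard₀ _ i.isLt.le] at h₀
      rw [hcard₁ (i.val + 1) i.isLt, hcard₁ _ i.isLt.le] at h₁
      have ha := List.sum_take_succ a i.val (by omega)
      have h₂ := hle i
      have h₃ := hle (i.val + 1)
      have hget : L.get i = (a[i.val]'(by omega) : ℕ) := by simp [hL]
      rw [hget, Nat.cast_inj]
      omega
    · refine List.ext_getElem (by simp [hlen, hwlen]) fun i h₁ h₂ => ?_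
      rw [List.getElem_ofFn]
      exact hcount₁ _

/-- **Lemma of Brooks–Martín del Campo–Sottile.** Let `a` be a reduced special Schubert
problem for `Gr(2,n)`: `1 ≤ a_i ≤ n−3`, `a_i + a_j ≤ n−2` for `i < j`, and
`Σ a_i = 2(n−2)`.  If `a ≠ (1,1,1,1)` then some rearrangement `(b₁,…,b_r)` of `a`
satisfies `K_{n−2}(b₁,…,b_{r−2}, b_{r−1}+b_r) ≠ K_{n−3}(b₁,…,b_{r−2}, b_{r−1}−1, b_r−1)`;
when `a = (1,1,1,1)` both of these numbers equal `1`. -/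
theorem reduced_problem_inequality (n : ℕ) (hn : 4 ≤ n) (a : List ℤ)
    (hbd : ∀ z ∈ a, 1 ≤ z ∧ z ≤ (n : ℤ) - 3)
    (hpair : a.Pairwise fun u v => u + v ≤ (n : ℤ) - 2)
    (hsum : a.sum = 2 * ((n : ℤ) - 2)) :
    (a ≠ [1, 1, 1, 1] →
      ∃ (c : List ℤ) (x y : ℤ), (c ++ [x, y]).Perm a ∧
        Kostka (n - 2) (c ++ [x + y]) ≠ Kostka (n - 3) (c ++ [x - 1, y - 1])) ∧
    (a = [1, 1, 1, 1] →
      Kostka (n - 2) [1, 1, 2] = 1 ∧ Kostka (n - 3) [1, 1, 0, 0] = 1) := by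
  constructor
  · intro hne
    lift a to List ℕ using fun z hz => by have := (hbd z hz).1; omega
    obtain ⟨c, u, v, hperm, hK⟩ := exists_irredMult_ne (n - 2) a
      (fun z hz => by have := hbd z (List.mem_map_of_mem hz); omega)
      ((List.pairwise_map.1 hpair).imp fun h => by omega)
      (by rw [← Nat.cast_list_sum] at hsum; omega) (by omega)
      (by rintro rfl; exact hne rfl)
    have hu := hbd u (List.mem_map_of_mem (hperm.mem_iff.1 (by simp)))
    have hv := hbd v (List.mem_map_of_mem (hperm.mem_iff.1 (by simp)))
    have hsum' : u + (v + c.sum) = 2 * (n - 2) := by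
      have := hperm.sum_eq
      simp only [List.sum_cons] at this
      rw [← Nat.cast_list_sum] at hsum
      omega
    have hperm₂ : (c ++ [u, v]).Perm (u :: v :: c) := List.perm_append_comm
    have hperm₁ : (c ++ [u + v]).Perm ((u + v) :: c) := List.perm_append_comm
    have hperm₀ : (c ++ [u - 1, v - 1]).Perm ((u - 1) :: (v - 1) :: c) := List.perm_append_comm
    refine ⟨c.map (↑), u, v, ?_, fun h => hK ?_⟩
    · simpa using (hperm₂.trans hperm).map ((↑) : ℕ → ℤ)
    · have h₁ := kostka_eq_irredMult (n - 2) (c ++ [u + v]) (by simp; omega)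
      have h₀ := kostka_eq_irredMult (n - 3) (c ++ [u - 1, v - 1]) (by simp; omega)
      rw [irredMult_perm hperm₁] at h₁
      rw [irredMult_perm hperm₀] at h₀
      rw [← h₁, ← h₀, Nat.cast_inj]
      have hu' : ((u - 1 : ℕ) : ℤ) = u - 1 := by omega
      have hv' : ((v - 1 : ℕ) : ℤ) = v - 1 := by omega
      simpa [hu', hv'] using h
  · rintro rfl
    obtain rfl : n = 4 := by simp at hsum; omega
    have h₁ := kostka_eq_irredMult 2 [1, 1, 2] rfl
    have h₀ := kostka_eq_irredMult 1 [1, 1, 0, 0] rfl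
    have e₁ : irredMult [1, 1, 2] 0 = 1 := by decide
    have e₀ : irredMult [1, 1, 0, 0] 0 = 1 := by decide
    rw [e₁] at h₁
    rw [e₀] at h₀
    exact ⟨by exact_mod_cast h₁, by exact_mod_cast h₀⟩
end

section
/- Let k ≥ 1 and equip ℂ^{2k} with the symplectic (nondegenerate, skew-symmetric) bilinear form ⟨·,·⟩ determined by ⟨e_i, e_{2k+1−i}⟩ = (−1)^i for 1 ≤ i ≤ 2k and ⟨e_i, e_j⟩ = 0 whenever i + j ≠ 2k+1, where e₁,…,e_{2k} is the standard basis. Let γ be the rational normal curve in ℂ^{2k}. Then for every t ∈ ℂ and every 1 ≤ i ≤ 2k−1, the annihilator F_i(t)^⊥ := { w ∈ ℂ^{2k} : ⟨w, v⟩ = 0 for all v ∈ F_i(t) } equals F_{2k−i}(t); that is, the flags osculating γ are symplectic. [Asserted in Section 4.4 in the study of symmetric Schubert problems.] -/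
/-- The symplectic bilinear form on `ℂ^{2k}` determined (in 1-indexed notation) by
`⟨e_i, e_{2k+1−i}⟩ = (−1)^i` and `⟨e_i, e_j⟩ = 0` for `i + j ≠ 2k + 1`; in 0-indexed
coordinates, `⟨e_a, e_b⟩ = (−1)^{a+1}` when `a + b = 2k − 1` and `0` otherwise. -/
noncomputable def sympForm (k : ℕ) (v w : Fin (2 * k) → ℂ) : ℂ :=
  ∑ a : Fin (2 * k), ∑ b : Fin (2 * k),
    v a * w b *
      (if (a : ℕ) + (b : ℕ) = 2 * k - 1 then (-1 : ℂ) ^ ((a : ℕ) + 1) else 0)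

open PowerSeries in
/-- The coordinates of `γ^{(m)}(t)` are the coefficients of `X ^ m * exp (t X)`. -/
lemma gammaVec_eq_coeff (n m : ℕ) (t : ℂ) (a : Fin n) :
    gammaVec n m t a = coeff (a : ℕ) (X ^ m * rescale t (exp ℂ)) := by
  rw [gammaVec, Polynomial.iterate_derivative_C_mul, Polynomial.iterate_derivative_X_pow_eq_smul,
    coeff_X_pow_mul']
  split_ifs with h
  · have h₁ : ((a : ℕ).factorial : ℂ) ≠ 0 := by exact_mod_cast Nat.factorial_ne_zero _
    have h₂ : (((a : ℕ) - m).factorial : ℂ) ≠ 0 := by exact_mod_cast Nat.factorial_ne_zero _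
    have h₃ : (((a : ℕ) - m).factorial : ℂ) * ((a : ℕ).descFactorial m : ℂ) =
        (a : ℕ).factorial := by
      exact_mod_cast Nat.factorial_mul_descFactorial h
    simp only [Polynomial.eval_mul, Polynomial.eval_C, Polynomial.eval_smul, Polynomial.eval_pow,
      Polynomial.eval_X, coeff_rescale, coeff_exp, smul_eq_mul, map_div₀, map_one,
      map_natCast]
    field_simp
    rw [← h₃]
    ring
  · simp [Nat.descFactorial_of_lt (not_le.mp h)]

/-- The form `sympForm` as a sum over an antidiagonal. -/
lemma sympForm_eq_sum_antidiagonal {k : ℕ} (hk : 1 ≤ k) {v w : Fin (2 * k) → ℂ} {f g : ℕ → ℂ}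
    (hf : ∀ a : Fin (2 * k), v a = f a) (hg : ∀ b : Fin (2 * k), w b = g b) :
    sympForm k v w =
      ∑ p ∈ Finset.HasAntidiagonal.antidiagonal (2 * k - 1),
        (-1 : ℂ) ^ (p.1 + 1) * f p.1 * g p.2 := by
  have hN : (2 * k - 1).succ = 2 * k := by omega
  rw [Finset.Nat.sum_antidiagonal_eq_sum_range_succ_mk, hN, ← Fin.sum_univ_eq_sum_range
    (fun a => (-1 : ℂ) ^ (a + 1) * f a * g (2 * k - 1 - a))]
  refine Finset.sum_congr rfl fun a _ => ?_
  rw [Finset.sum_eq_single (⟨2 * k - 1 - a, by omega⟩ : Fin (2 * k))]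
  · rw [if_pos (by simp only; omega), hf, hg]
    ring
  · intro b _ hb
    rw [if_neg, mul_zero]
    intro h
    exact hb (Fin.ext (by simp only; omega))
  · simp

open PowerSeries in
/-- The Gram matrix of the derivatives of the rational normal curve is antidiagonal. -/
lemma sympForm_gammaVec {k : ℕ} (hk : 1 ≤ k) (m l : ℕ) (t : ℂ) :
    sympForm k (gammaVec (2 * k) m t) (gammaVec (2 * k) l t) =
      if m + l = 2 * k - 1 then (-1 : ℂ) ^ (m + 1) else 0 := by
  rw [sympForm_eq_sum_antidiagonal hk (f := fun a => coeff a (X ^ m * rescale t (exp ℂ)))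
    (g := fun b => coeff b (X ^ l * rescale t (exp ℂ)))
    (gammaVec_eq_coeff _ m t) (gammaVec_eq_coeff _ l t)]
  have hsign (a : ℕ) : (-1 : ℂ) ^ (a + 1) * coeff a (X ^ m * rescale t (exp ℂ)) =
      (-1 : ℂ) ^ (m + 1) * coeff a (X ^ m * rescale (-t) (exp ℂ)) := by
    rw [coeff_X_pow_mul', coeff_X_pow_mul']
    split_ifs with h
    · obtain ⟨c, rfl⟩ := Nat.exists_eq_add_of_le h
      rw [Nat.add_sub_cancel_left, coeff_rescale, coeff_rescale, neg_pow t c]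
      ring
    · simp
  have hprod : (X ^ m * rescale (-t) (exp ℂ)) * (X ^ l * rescale t (exp ℂ)) =
      (X : PowerSeries ℂ) ^ (m + l) := by
    rw [mul_mul_mul_comm, exp_mul_exp_eq_exp_add, ← pow_add, neg_add_cancel]
    simp
  simp_rw [hsign, mul_assoc]
  rw [← Finset.mul_sum, ← coeff_mul, hprod, coeff_X_pow]
  simp [eq_comm]

/-- The form `sympForm` as a bilinear map. -/
noncomputable def sympBilin (k : ℕ) : (Fin (2 * k) → ℂ) →ₗ[ℂ] (Fin (2 * k) → ℂ) →ₗ[ℂ] ℂ :=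
  LinearMap.mk₂ ℂ (sympForm k)
    (fun _ _ _ => by simp only [sympForm, Pi.add_apply, add_mul, Finset.sum_add_distrib])
    (fun _ _ _ => by
      simp only [sympForm, Pi.smul_apply, smul_eq_mul, mul_assoc, Finset.mul_sum])
    (fun _ _ _ => by
      simp only [sympForm, Pi.add_apply, mul_add, add_mul, Finset.sum_add_distrib])
    (fun _ _ _ => by
      simp only [sympForm, Pi.smul_apply, smul_eq_mul, mul_assoc, mul_left_comm, Finset.mul_sum])

lemma sympBilin_apply (k : ℕ) (v w : Fin (2 * k) → ℂ) : sympBilin k v w = sympForm k v w := rfl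

/-- Pairing a combination of the `γ^{(m)}(t)` with `γ^{(2k-1-j)}(t)` extracts the `j`-th
coefficient, up to sign. -/
lemma sympForm_sum_gammaVec {k : ℕ} (hk : 1 ≤ k) (t : ℂ) (c : Fin (2 * k) → ℂ)
    (j : Fin (2 * k)) :
    sympForm k (∑ m, c m • gammaVec (2 * k) m t) (gammaVec (2 * k) (2 * k - 1 - j) t) =
      c j * (-1 : ℂ) ^ ((j : ℕ) + 1) := by
  rw [← sympBilin_apply, map_sum, LinearMap.sum_apply, Finset.sum_eq_single j]
  · rw [map_smul, LinearMap.smul_apply, sympBilin_apply, sympForm_gammaVec hk,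
      if_pos (by omega), smul_eq_mul]
  · intro m _ hm
    rw [map_smul, LinearMap.smul_apply, sympBilin_apply, sympForm_gammaVec hk, if_neg, smul_zero]
    intro h
    exact hm (Fin.ext (by omega))
  · simp

lemma linearIndependent_gammaVec {k : ℕ} (hk : 1 ≤ k) (t : ℂ) :
    LinearIndependent ℂ fun m : Fin (2 * k) => gammaVec (2 * k) m t := by
  rw [Fintype.linearIndependent_iff]
  intro c hc j
  have h := sympForm_sum_gammaVec hk t c j
  rw [hc, ← sympBilin_apply, map_zero, LinearMap.zero_apply] at h
  simpa using h.symm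

lemma exists_eq_sum_gammaVec {k : ℕ} (hk : 1 ≤ k) (t : ℂ) (w : Fin (2 * k) → ℂ) :
    ∃ c : Fin (2 * k) → ℂ, ∑ m, c m • gammaVec (2 * k) m t = w := by
  have hspan := (linearIndependent_gammaVec hk t).span_eq_top_of_card_eq_finrank' (by simp)
  rw [← Submodule.mem_span_range_iff_exists_fun, hspan]
  exact Submodule.mem_top

/-- **Flags osculating the rational normal curve are symplectic.** For every `t ∈ ℂ`
and `1 ≤ i ≤ 2k − 1`, the annihilator of `F_i(t)` under the symplectic form equals
`F_{2k−i}(t)`. -/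
theorem osculating_flags_are_symplectic (k : ℕ) (hk : 1 ≤ k) (t : ℂ)
    (i : ℕ) (hi1 : 1 ≤ i) (hi2 : i ≤ 2 * k - 1) :
    {w : Fin (2 * k) → ℂ | ∀ v ∈ oscFlag (2 * k) i t, sympForm k w v = 0} =
      ↑(oscFlag (2 * k) (2 * k - i) t) := by
  ext w
  rw [Set.mem_ofPred_eq, SetLike.mem_coe]
  constructor
  · intro hw
    obtain ⟨c, rfl⟩ := exists_eq_sum_gammaVec hk t w
    refine Submodule.sum_mem _ fun m _ => ?_
    by_cases hm : (m : ℕ) < 2 * k - i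
    · exact Submodule.smul_mem _ _ (Submodule.subset_span ⟨⟨m, hm⟩, rfl⟩)
    · have h := hw (gammaVec (2 * k) (2 * k - 1 - m) t)
        (Submodule.subset_span ⟨⟨2 * k - 1 - m, by omega⟩, rfl⟩)
      rw [sympForm_sum_gammaVec hk] at h
      have hc : c m = 0 := by simpa using h
      simp [hc]
  · intro hw v hv
    have hle : oscFlag (2 * k) i t ≤ LinearMap.ker (sympBilin k w) := by
      refine Submodule.span_le.mpr ?_
      rintro _ ⟨l, rfl⟩
      have hle' : oscFlag (2 * k) (2 * k - i) t ≤
          LinearMap.ker ((sympBilin k).flip (gammaVec (2 * k) l t)) := by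
        refine Submodule.span_le.mpr ?_
        rintro _ ⟨m, rfl⟩
        rw [SetLike.mem_coe, LinearMap.mem_ker, LinearMap.flip_apply, sympBilin_apply,
          sympForm_gammaVec hk, if_neg (by omega)]
      exact hle' hw
    exact hle hv
end

section
/- Let n ≥ 1 and let G be a subgroup of the symmetric group S_n whose natural action on {1,…,n} is primitive (it is transitive and preserves no nontrivial partition of {1,…,n} into blocks). If G contains an ℓ-cycle for some prime number ℓ with ℓ < n−2, then G contains the alternating group A_n; that is, G is either S_n or A_n. [Jordan's theorem (1873), as stated in Section 5.5.] -/
open MulAction in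
/-- A group action is preprimitive if it is transitive and every invariant equivalence relation is
trivial. -/
theorem isPreprimitive_of_forall_setoid {M α : Type*} [Group M] [MulAction M α]
    [IsPretransitive M α]
    (h : ∀ s : Setoid α, (∀ (g : M) (x y : α), s.r x y → s.r (g • x) (g • y)) →
      s = ⊥ ∨ s = ⊤) : IsPreprimitive M α where
  isTrivialBlock_of_isBlock := by
    intro B hB
    let s : Setoid α :=
      { r := fun x y => ∀ g : M, g • x ∈ B ↔ g • y ∈ B
        iseqv := ⟨fun _ _ => Iff.rfl, fun h g => (h g).symm, fun h k g => (h g).trans (k g)⟩ }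
    have hs : ∀ (g : M) (x y : α), s.r x y → s.r (g • x) (g • y) := by
      intro g x y hxy k
      simpa only [smul_smul] using hxy (k * g)
    rcases h s hs with h | h
    · left
      intro x hx y hy
      have key : ∀ z ∈ B, ∀ w ∈ B, ∀ g : M, g • z ∈ B → g • w ∈ B := by
        intro z hz w hw g hg
        rw [← hB.smul_eq_of_mem hz hg]
        exact Set.smul_mem_smul_set hw
      have hxy : s.r x y := fun g => ⟨key x hx y hy g, key y hy x hx g⟩
      rw [h] at hxy
      exact hxy
    · rcases B.eq_empty_or_nonempty with rfl | ⟨b, hb⟩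
      · exact Or.inl Set.subsingleton_empty
      · right
        refine Set.eq_univ_of_forall fun y => ?_
        have hby : s.r b y := by rw [h]; trivial
        simpa using (hby 1).1 (by simpa using hb)

namespace Equiv.Perm

open MulAction

variable {α : Type*} [Fintype α] [DecidableEq α] {G : Subgroup (Perm α)}

/-- If a primitive group contains a cycle of prime length fixing some point, then every
permutation agrees with an element of the group on the fixed points of the cycle. -/
theorem exists_mem_eqOn_compl_support (hG : IsPreprimitive G α) {σ : Perm α} (hσ : σ ∈ G)
    (hc : σ.IsCycle) (hp : σ.support.card.Prime) (hlt : σ.support.card < Fintype.card α)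
    (τ : Perm α) : ∃ g ∈ G, ∀ x ∉ σ.support, g x = τ x := by
  classical
  obtain ⟨n, hn⟩ := Nat.exists_eq_add_of_lt hlt
  have hsn : Set.ncard ((σ.support : Set α)ᶜ) = n + 1 := by
    apply Nat.add_left_cancel (n := Set.ncard (σ.support : Set α))
    rw [Set.ncard_add_ncard_compl, Set.ncard_coe_finset, Nat.card_eq_fintype_card, hn, add_assoc]
  have h2 := hp.two_le
  have hmul : IsMultiplyPreprimitive G α (n + 2) := by
    apply hG.isMultiplyPreprimitive hsn
    · rw [Nat.card_eq_fintype_card]; omega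
    have := isPretransitive_of_isCycle_mem hc hσ
    apply IsPreprimitive.of_prime_card
    convert! hp
    rw [Nat.card_eq_fintype_card, Fintype.card_subtype]
    congr 1
    ext x
    simp [SubMulAction.mem_ofFixingSubgroup_iff]
  have htr : IsMultiplyPretransitive G α (n + 1) := by
    have : IsMultiplyPretransitive G α (n + 2) :=
      IsMultiplyPreprimitive.isMultiplyPretransitive ..
    apply isMultiplyPretransitive_of_le (n := n + 2) (by omega)
    rw [Nat.card_eq_fintype_card]; omega
  let e : ((σ.support : Set α)ᶜ : Set α) ≃ Fin (n + 1) := Finite.equivFinOfCardEq hsn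
  let f : Fin (n + 1) ↪ α := e.symm.toEmbedding.trans (Function.Embedding.subtype _)
  obtain ⟨g, hg⟩ := exists_smul_eq G f (f.trans τ.toEmbedding)
  refine ⟨g, g.2, fun x hx => ?_⟩
  have := DFunLike.congr_fun hg (e ⟨x, by simpa using hx⟩)
  simpa [f] using! this

/-- Two cyclic subgroups generated by elements of prime order `p` are conjugate in any
finite group of order dividing `p!`. -/
theorem exists_conj_mem_zpowers {H : Type*} [Group H] [Finite H] {p : ℕ} (hp : p.Prime)
    (hH : Nat.card H ∣ p.factorial) {a b : H} (ha : orderOf a = p) (hb : orderOf b = p) :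
    ∃ h : H, h * b * h⁻¹ ∈ Subgroup.zpowers a := by
  have := Fact.mk hp
  have hcard : p ^ (Nat.card H).factorization p = p := by
    have h1 : (Nat.card H).factorization p ≤ 1 := by
      have := (Nat.factorization_le_iff_dvd Nat.card_pos.ne' p.factorial_ne_zero).2 hH p
      have h2 : p.factorial.factorization p = 1 := by
        rw [← Nat.mul_factorial_pred hp.ne_zero, Nat.factorization_mul hp.ne_zero
          (Nat.factorial_ne_zero _), Finsupp.add_apply, hp.factorization_self,
          Nat.factorization_factorial_eq_zero_of_lt (Nat.sub_lt hp.pos one_pos)]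
      omega
    have h2 : 1 ≤ (Nat.card H).factorization p :=
      hp.factorization_pos_of_dvd Nat.card_pos.ne' (ha ▸ orderOf_dvd_natCard a)
    rw [le_antisymm h1 h2, pow_one]
  let P : Sylow p H := Sylow.ofCard (Subgroup.zpowers a) (by rw [Nat.card_zpowers, ha, hcard])
  let Q : Sylow p H := Sylow.ofCard (Subgroup.zpowers b) (by rw [Nat.card_zpowers, hb, hcard])
  obtain ⟨h, hh⟩ := exists_smul_eq H Q P
  refine ⟨h, ?_⟩
  have hmem : h * b * h⁻¹ ∈ h • Q := by
    rw [← SetLike.mem_coe, Sylow.coe_smul]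
    exact ⟨b, Subgroup.mem_zpowers b, by simp [MulAut.conj_apply]⟩
  rw [hh] at hmem
  exact hmem

/-- A permutation stabilizing the set of fixed points of a cycle of prime length in a primitive
group can be realised on these fixed points by an element of the group normalizing the cycle. -/
theorem exists_mem_eqOn_compl_support_conj_mem_zpowers (hG : IsPreprimitive G α) {σ : Perm α}
    (hσ : σ ∈ G) (hc : σ.IsCycle) (hp : σ.support.card.Prime)
    (hlt : σ.support.card < Fintype.card α) (τ : Perm α) (hτ : Disjoint τ σ) :
    ∃ g ∈ G, (∀ x ∉ σ.support, g x = τ x) ∧ g * σ * g⁻¹ ∈ Subgroup.zpowers σ := by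
  obtain ⟨g, hg, hgτ⟩ := exists_mem_eqOn_compl_support hG hσ hc hp hlt τ
  let R : Subgroup (Perm α) := (ofSubtype (p := fun x => x ∈ σ.support)).range
  have hR : ∀ f : Perm α, (∀ x ∉ σ.support, f x = x) → f ∈ R := by
    intro f hf
    have hf' : ∀ x, f x ∈ σ.support ↔ x ∈ σ.support := by
      intro x
      refine ⟨fun h => ?_, fun h => ?_⟩
      · by_contra hx
        exact hx (hf x hx ▸ h)
      · by_contra hx
        exact hx ((f.injective (hf _ hx)).symm ▸ h)
    refine ⟨f.subtypePerm hf', ofSubtype_subtypePerm hf' fun x hx => ?_⟩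
    by_contra h
    exact hx (hf x h)
  have hRfix : ∀ f ∈ R, ∀ x ∉ σ.support, f x = x := by
    rintro _ ⟨f, rfl⟩ x hx
    exact ofSubtype_apply_of_not_mem f hx
  have hτs : ∀ x ∉ σ.support, τ⁻¹ x ∉ σ.support := by
    intro x hx
    rw [notMem_support] at hx ⊢
    rw [← mul_apply, hτ.inv_left.commute.symm.eq, mul_apply, hx]
  have hgs : ∀ x ∉ σ.support, g⁻¹ x = τ⁻¹ x := by
    intro x hx
    rw [inv_eq_iff_eq, hgτ _ (hτs x hx), ← mul_apply, mul_inv_cancel, one_apply]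
  have hgσ : g * σ * g⁻¹ ∈ R := by
    refine hR _ fun x hx => ?_
    have h := notMem_support.1 (hτs x hx)
    rw [mul_apply, mul_apply, hgs x hx, h, ← hgs x hx, ← mul_apply, mul_inv_cancel, one_apply]
  let H : Subgroup (Perm α) := G ⊓ R
  have hH : Nat.card H ∣ σ.support.card.factorial := by
    refine (Subgroup.card_dvd_of_le (inf_le_right : H ≤ R)).trans ?_
    refine (Subgroup.card_range_dvd _).trans ?_
    rw [Nat.card_perm, Nat.card_eq_fintype_card, Fintype.card_coe]
  let a : H := ⟨σ, hσ, hR σ fun x hx => notMem_support.1 hx⟩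
  let b : H := ⟨g * σ * g⁻¹, G.mul_mem (G.mul_mem hg hσ) (G.inv_mem hg), hgσ⟩
  have ha : orderOf a = σ.support.card := by
    rw [← Subgroup.orderOf_coe, hc.orderOf]
  have hb : orderOf b = σ.support.card := by
    rw [← Subgroup.orderOf_coe, (hc.conj (g := g)).orderOf, card_support_conj]
  obtain ⟨⟨h, hhG, hhR⟩, hh⟩ := exists_conj_mem_zpowers hp hH ha hb
  refine ⟨h * g, G.mul_mem hhG hg, fun x hx => ?_, ?_⟩
  · rw [mul_apply, hgτ x hx]
    refine hRfix h hhR _ ?_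
    rw [notMem_support] at hx ⊢
    rw [← mul_apply, hτ.commute.symm.eq, mul_apply, hx]
  · obtain ⟨i, hi⟩ := Subgroup.mem_zpowers_iff.1 hh
    refine Subgroup.mem_zpowers_iff.2 ⟨i, ?_⟩
    have := congrArg Subtype.val hi
    simpa [a, b, mul_assoc] using this

/-- A permutation commuting with a cycle agrees with a power of it on its support. -/
theorem IsCycle.exists_zpow_eqOn_support {σ c : Perm α} (hc : σ.IsCycle) (h : Commute c σ) :
    ∃ i : ℤ, ∀ x ∈ σ.support, c x = (σ ^ i) x := by
  obtain ⟨a, ha, hcyc⟩ := hc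
  have hca : σ (c a) ≠ c a := by
    rw [← mul_apply, ← h.eq, mul_apply]
    exact fun h => ha (c.injective h)
  obtain ⟨i, hi⟩ := hcyc hca
  refine ⟨i, fun x hx => ?_⟩
  obtain ⟨j, rfl⟩ := hcyc (mem_support.1 hx)
  rw [← mul_apply, (h.zpow_right j).eq, mul_apply, ← hi, ← mul_apply, ← mul_apply,
    ← zpow_add, ← zpow_add, add_comm]

/-- Two elements normalizing a cyclic subgroup have a commutator centralizing it. -/
theorem commute_commutator_of_conj_mem_zpowers {K : Type*} [Group K] {s x y : K}
    (hx : x * s * x⁻¹ ∈ Subgroup.zpowers s) (hy : y * s * y⁻¹ ∈ Subgroup.zpowers s) :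
    Commute ((y * x)⁻¹ * (x * y)) s := by
  obtain ⟨i, hi⟩ := Subgroup.mem_zpowers_iff.1 hx
  obtain ⟨j, hj⟩ := Subgroup.mem_zpowers_iff.1 hy
  have hxy : (x * y) * s * (x * y)⁻¹ = s ^ (i * j) := by
    calc (x * y) * s * (x * y)⁻¹ = x * (y * s * y⁻¹) * x⁻¹ := by group
      _ = s ^ (i * j) := by rw [← hj, ← conj_zpow, ← hi, ← zpow_mul]
  have hyx : (y * x) * s * (y * x)⁻¹ = s ^ (i * j) := by
    calc (y * x) * s * (y * x)⁻¹ = y * (x * s * x⁻¹) * y⁻¹ := by group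
      _ = s ^ (i * j) := by rw [← hi, ← conj_zpow, ← hj, ← zpow_mul, mul_comm]
  rw [← hyx, mul_inv_eq_iff_eq_mul] at hxy
  rw [commute_iff_eq, mul_assoc, hxy]
  group

/-- **Jordan's theorem**: a primitive permutation group containing a cycle of prime length which
fixes at least three points contains the alternating group. -/
theorem alternatingGroup_le_of_isPreprimitive_of_isCycle_mem (hG : IsPreprimitive G α)
    {σ : Perm α} (hσ : σ ∈ G) (hc : σ.IsCycle) (hp : σ.support.card.Prime)
    (hcard : σ.support.card + 3 ≤ Fintype.card α) : alternatingGroup α ≤ G := by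
  have h3 : 2 < (σ.supportᶜ).card := by rw [Finset.card_compl]; omega
  obtain ⟨a, b, c, ha, hb, hc', hab, hac, hbc⟩ := Finset.two_lt_card_iff.1 h3
  simp only [Finset.mem_compl, notMem_support] at ha hb hc'
  have hdisj : ∀ u v : α, σ u = u → σ v = v → Disjoint (swap u v) σ := by
    intro u v hu hv x
    by_cases hxu : x = u
    · exact Or.inr (hxu ▸ hu)
    by_cases hxv : x = v
    · exact Or.inr (hxv ▸ hv)
    exact Or.inl (swap_apply_of_ne_of_ne hxu hxv)
  have hlt : σ.support.card < Fintype.card α := by omega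
  have hs := hdisj a b ha hb
  have ht := hdisj a c ha hc'
  obtain ⟨x, hx, hxs, hxσ⟩ :=
    exists_mem_eqOn_compl_support_conj_mem_zpowers hG hσ hc hp hlt _ hs
  obtain ⟨y, hy, hyt, hyσ⟩ :=
    exists_mem_eqOn_compl_support_conj_mem_zpowers hG hσ hc hp hlt _ ht
  obtain ⟨i, hi⟩ := hc.exists_zpow_eqOn_support
    (commute_commutator_of_conj_mem_zpowers hxσ hyσ)
  have hstab : ∀ τ : Perm α, Disjoint τ σ → ∀ z ∉ σ.support, τ z ∉ σ.support := by
    intro τ hτ z hz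
    rw [notMem_support] at hz ⊢
    rw [← mul_apply, hτ.commute.symm.eq, mul_apply, hz]
  have hσi : ∀ z ∈ σ.support, (σ ^ (-i)) z ∈ σ.support := fun z hz =>
    zpow_apply_mem_support.2 hz
  have hw : (y * x)⁻¹ * (x * y) * σ ^ (-i) =
      (swap a c * swap a b)⁻¹ * (swap a b * swap a c) := by
    ext z
    by_cases hz : z ∈ σ.support
    · have hfix : ∀ τ : Perm α, Disjoint τ σ → τ z = z := fun τ hτ =>
        (hτ z).resolve_right (mem_support.1 hz)
      rw [mul_apply, hi _ (hσi z hz), ← mul_apply, ← zpow_add, add_neg_cancel, zpow_zero,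
        hfix _ ((ht.mul_left hs).inv_left.mul_left (hs.mul_left ht)), one_apply]
    · have hz' : (σ ^ (-i)) z = z := zpow_apply_eq_self_of_apply_eq_self (notMem_support.1 hz) _
      rw [mul_apply, hz', mul_apply, mul_apply, inv_eq_iff_eq,
        hyt z hz, hxs _ (hstab _ ht z hz)]
      have hd := (ht.mul_left hs).inv_left.mul_left (hs.mul_left ht)
      rw [mul_apply y x, hxs _ (hstab _ hd z hz),
        hyt _ (hstab _ hs _ (hstab _ hd z hz))]
      simp [mul_apply]
  have hthree : IsThreeCycle ((swap a c * swap a b)⁻¹ * (swap a b * swap a c)) := by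
    have h := (isThreeCycle_swap_mul_swap_same hab hac hbc).isThreeCycle_sq
    simpa [mul_inv_rev] using h
  refine alternatingGroup_le_of_isPreprimitive_of_isThreeCycle_mem hG hthree ?_
  rw [← hw]
  exact G.mul_mem (G.mul_mem (G.inv_mem (G.mul_mem hy hx)) (G.mul_mem hx hy)) (G.zpow_mem hσ _)

end Equiv.Perm

/-- **Jordan's theorem (1873).** Let `G ≤ S_n` be a permutation group that is
transitive and primitive (the only `G`-invariant equivalence relations, i.e.
partitions, of `{1, …, n}` are the partition into singletons (`⊥`) and the partition
with a single block (`⊤`)).  If `G` contains an `ℓ`-cycle for some prime `ℓ < n − 2`,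
then `G` contains the alternating group `A_n`; that is, `G` is `S_n` or `A_n`. -/
theorem jordan_primitive_contains_alternating (n : ℕ) (hn : 1 ≤ n)
    (G : Subgroup (Equiv.Perm (Fin n)))
    (htrans : ∀ x y : Fin n, ∃ g ∈ G, g x = y)
    (hprim : ∀ s : Setoid (Fin n),
      (∀ g ∈ G, ∀ x y : Fin n, s.r x y → s.r (g x) (g y)) → s = ⊥ ∨ s = ⊤)
    (ℓ : ℕ) (hℓ : ℓ.Prime) (hℓn : ℓ < n - 2)
    (σ : Equiv.Perm (Fin n)) (hσG : σ ∈ G) (hcyc : σ.IsCycle)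
    (hsupp : σ.support.card = ℓ) :
    alternatingGroup (Fin n) ≤ G := by
  have : MulAction.IsPretransitive G (Fin n) := ⟨fun x y => by
    obtain ⟨g, hg, h⟩ := htrans x y
    exact ⟨⟨g, hg⟩, h⟩⟩
  have hG : MulAction.IsPreprimitive G (Fin n) :=
    isPreprimitive_of_forall_setoid fun s hs => hprim s fun g hg x y h => hs ⟨g, hg⟩ x y h
  refine Equiv.Perm.alternatingGroup_le_of_isPreprimitive_of_isCycle_mem hG hσG hcyc
    (hsupp ▸ hℓ) ?_
  rw [hsupp, Fintype.card_fin]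
  omega
end
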